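/- Let s ≥ 1 and t ≥ 5 be integers and set n = 2(2^s − 1) + 2^s(2^t − 1) = 2^{s+t} + 2^s − 2. Consider the Kameko surjection Sq^0 : Q_n → Q_{(n−4)/2} = Q_{2^{s+t−1} + 2^{s−1} − 3}. Then the subspace of GL_4(F_2)-invariant elements of the kernel of this map is trivial if s ∈ {1, 2} and is one-dimensional if s ≥ 3. -/

import Mathlib

/-!
Common setup: the polynomial algebra `P_4 = F_2[x_1,x_2,x_3,x_4]` (variables `X 0, ..., X 3`),
the Steenrod action, hit polynomials, the cohit spaces `Q_n`, and the (induced) actions of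
`GL_4(F_2)` and of the symmetric group `Σ_4` on `Q_n`.
-/

open MvPolynomial

noncomputable section

abbrev kk : Type := ZMod 2
abbrev P4 : Type := MvPolynomial (Fin 4) kk

/-- The total Steenrod square: the algebra endomorphism of `P4` with `X i ↦ X i + (X i)^2`.
For `g` homogeneous of degree `d`, `Sq^t g` is the degree-`d+t` homogeneous component
of `sqTotal g`. -/
def sqTotal : P4 →ₐ[kk] P4 := aeval fun i => X i + X i ^ 2

/-- The homogeneous polynomials of degree `n`, i.e. `(P_4)_n`, as a submodule. -/
def homog (n : ℕ) : Submodule kk P4 := homogeneousSubmodule (Fin 4) kk n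

/-- The subspace `H_n` of hit polynomials of degree `n`: it is spanned by the elements
`Sq^{n-d}(g) = (sqTotal g)_n` for `g` homogeneous of degree `d < n`, i.e. by all
`∑_{t>0} Sq^t(f_t)` with `f_t ∈ (P_4)_{n-t}`. -/
def hitSub (n : ℕ) : Submodule kk P4 :=
  Submodule.span kk
    {p | ∃ d, d < n ∧ ∃ g ∈ homog d, p = homogeneousComponent n (sqTotal g)}

/-- The cohit space `Q_n = (P_4)_n / H_n`. -/
abbrev Qn (n : ℕ) :=
  ↥(homog n) ⧸ ((hitSub n).comap (homog n).subtype)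

/-- Projection of a polynomial onto its degree-`n` part, landing in `homog n`. -/
def toHomog (n : ℕ) : P4 →ₗ[kk] homog n :=
  (homogeneousComponent n).codRestrict (homog n) fun f => homogeneousComponent_mem n f

/-- The class in `Q_n` of (the degree-`n` component of) a polynomial.  For `f`
homogeneous of degree `n` this is the class `[f]` of `f`. -/
def Qmk (n : ℕ) : P4 →ₗ[kk] Qn n :=
  ((hitSub n).comap (homog n).subtype).mkQ.comp (toHomog n)

/-- Substitution action of a matrix `M`: the algebra endomorphism `X i ↦ ∑ j M i j • X j`. -/
def substM (M : Matrix (Fin 4) (Fin 4) kk) : P4 →ₐ[kk] P4 :=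
  aeval fun i => ∑ j, M i j • X j

/-- The set of invertible `4 × 4` matrices over `F_2`, i.e. `GL_4(F_2)`. -/
def glSet : Set (Matrix (Fin 4) (Fin 4) kk) := {M | IsUnit M}

/-- The set of permutation matrices, i.e. `Σ_4 ⊆ GL_4(F_2)`. -/
def permSet : Set (Matrix (Fin 4) (Fin 4) kk) :=
  {M | ∃ σ : Equiv.Perm (Fin 4), M = σ.toPEquiv.toMatrix}

/-- Homogeneous polynomials of degree `n` whose class in `Q_n` is invariant under every
element of `G` (the action on classes being induced by `substM`): for every `M ∈ G`,
`M·f - f` is hit. -/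
def invPre (n : ℕ) (G : Set (Matrix (Fin 4) (Fin 4) kk)) : Submodule kk P4 :=
  homog n ⊓ ⨅ M ∈ G, (hitSub n).comap ((substM M).toLinearMap - LinearMap.id)

/-- The subspace `(Q_n)^G` of `G`-invariant classes in `Q_n`. -/
def QInv (n : ℕ) (G : Set (Matrix (Fin 4) (Fin 4) kk)) : Submodule kk (Qn n) :=
  (invPre n G).map (Qmk n)

/-- The `Σ_4`-submodule of `Q_n` generated by the classes of the polynomials in `S`:
the span of the classes of all the permuted polynomials `σ · f`, `σ ∈ Σ_4`, `f ∈ S`. -/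
def permSpan (n : ℕ) (S : Set P4) : Submodule kk (Qn n) :=
  Submodule.span kk
    {c | ∃ σ : Equiv.Perm (Fin 4), ∃ f ∈ S, c = Qmk n (rename (⇑σ) f)}

/-- Halve an exponent vector with all entries odd: `a ↦ (a-1)/2` entrywise. -/
def halfExp (d : Fin 4 →₀ ℕ) : Fin 4 →₀ ℕ :=
  d.mapRange (fun a => (a - 1) / 2) (by decide)

open scoped Classical in
/-- The down Kameko map `(P_4)_{2m+4} → (P_4)_m`: the linear map sending a monomial
`f` to `g` if `f = x₁x₂x₃x₄ · g²` (i.e. all exponents of `f` are odd) and to `0` otherwise. -/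
def kameko : P4 →ₗ[kk] P4 :=
  (basisMonomials (Fin 4) kk).constr kk fun d =>
    if ∀ i, d i % 2 = 1 then monomial (halfExp d) 1 else 0

/-- The kernel of the Kameko squaring operation `Sq^0 : Q_{2m+4} → Q_m` induced by
`kameko`: the image in `Q_{2m+4}` of the homogeneous polynomials of degree `2m+4`
whose Kameko image has zero class in `Q_m`. -/
def kamekoKer (m : ℕ) : Submodule kk (Qn (2 * m + 4)) :=
  (homog (2 * m + 4) ⊓ (LinearMap.ker (Qmk m)).comap kameko).map (Qmk (2 * m + 4))

/-!
Every class in the kernel of the Kameko map is a sum of classes of iterated products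
`q₁ (q₂ (⋯ (q_s f²)² ⋯)²)²` with quadratic forms `qᵢ` and a form `f` of degree `2^t - 1`. For
`t ≥ 5` the class of `q f²` depends only on `q` and on the values of `f` on `F₂⁴`, so `f` may be
taken to be the indicator of a single vector `v ≠ 0`. Let `y` be a coordinate with `y(v) = 1`. The
class of `q f²` is zero for `q = y²` and for `q = z₁ z₂` with linear forms `zᵢ` vanishing at `v`, so
the kernel is spanned by the classes of `y z₁ (y z₂ (⋯ (y z_s f²)² ⋯)²)²` with `zᵢ(v) = 0`; such a
class depends only on `v` and on the set of the `zᵢ`.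

No hit polynomial in two variables involves the spike `a^(2^(s+t) - 1) b^(2^s - 1)`. Its
coefficient in the restriction of such a product to the plane spanned by `v` and `w` is `∏ zᵢ(w)`,
and by Möbius inversion these numbers determine a class in the kernel. They vanish when `v` and
`w` are linearly dependent, and for an invariant class they are the same for all independent
pairs, so the invariant classes form a space of dimension at most one. A nonzero invariant class
yields, for each `v`, the indicator of `w ≠ 0` in `F₂⁴ / v`, of degree `3` as a polynomial
function. Since the functions `∏ zᵢ` have degree at most `s`, this forces `s ≥ 3`, and for `s ≥ 3`
such a class exists.
-/

section SteenrodSquares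

variable {σ : Type*}

/-- The total Steenrod square `∑ Sq^k T^k`, with a formal variable `T` separating its
components. -/
def sqSeries : MvPolynomial σ kk →ₐ[kk] Polynomial (MvPolynomial σ kk) :=
  aeval fun i => Polynomial.C (X i) + Polynomial.X * Polynomial.C (X i ^ 2)

/-- The Steenrod square `Sq^k` on polynomials in arbitrarily many variables, not restricted to
homogeneous arguments. -/
def Sq (k : ℕ) : MvPolynomial σ kk →ₗ[kk] MvPolynomial σ kk :=
  (Polynomial.lcoeff (MvPolynomial σ kk) k).restrictScalars kk ∘ₗ sqSeries.toLinearMap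

lemma Sq_apply (k : ℕ) (f : MvPolynomial σ kk) : Sq k f = (sqSeries f).coeff k := rfl

lemma Sq_zero (f : MvPolynomial σ kk) : Sq 0 f = f := by
  have h : ((Polynomial.aeval (0 : MvPolynomial σ kk)).restrictScalars kk).comp
      (sqSeries (σ := σ)) = AlgHom.id kk (MvPolynomial σ kk) :=
    algHom_ext fun i => by simp [sqSeries]
  simpa [Sq_apply, Polynomial.coeff_zero_eq_aeval_zero] using DFunLike.congr_fun h f

lemma sqSeries_of_isHomogeneous_one {a : MvPolynomial σ kk} (ha : a.IsHomogeneous 1) :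
    sqSeries a = Polynomial.C a + Polynomial.X * Polynomial.C (a ^ 2) := by
  rw [← mem_homogeneousSubmodule, homogeneousSubmodule_one_eq_span_X] at ha
  induction ha using Submodule.span_induction with
  | mem _ h => obtain ⟨i, rfl⟩ := h; simp [sqSeries]
  | zero => simp
  | add a b _ _ iha ihb => rw [map_add, iha, ihb, CharTwo.add_sq]; simp only [map_add]; ring
  | smul c a _ iha =>
    rw [map_smul, iha, smul_pow, ZMod.pow_card, ← Polynomial.smul_C, ← Polynomial.smul_C,
      smul_add, mul_smul_comm]

lemma Sq_succ_mul {a : MvPolynomial σ kk} (ha : a.IsHomogeneous 1) (k : ℕ)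
    (f : MvPolynomial σ kk) : Sq (k + 1) (a * f) = a * Sq (k + 1) f + a ^ 2 * Sq k f := by
  rw [Sq_apply, map_mul, sqSeries_of_isHomogeneous_one ha, add_mul, mul_assoc,
    Polynomial.coeff_add, Polynomial.coeff_C_mul, Polynomial.coeff_X_mul, Polynomial.coeff_C_mul]
  rfl

lemma Sq_one_mul {a : MvPolynomial σ kk} (ha : a.IsHomogeneous 1) (f : MvPolynomial σ kk) :
    Sq 1 (a * f) = a * Sq 1 f + a ^ 2 * f := by
  simpa only [Sq_zero] using Sq_succ_mul ha 0 f

lemma Sq_two_mul {a : MvPolynomial σ kk} (ha : a.IsHomogeneous 1) (f : MvPolynomial σ kk) :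
    Sq 2 (a * f) = a * Sq 2 f + a ^ 2 * Sq 1 f :=
  Sq_succ_mul ha 1 f

lemma Sq_even_sq (k : ℕ) (f : MvPolynomial σ kk) : Sq (2 * k) (f ^ 2) = Sq k f ^ 2 := by
  rw [Sq_apply, Sq_apply, map_pow, ← Polynomial.map_frobenius_expand]
  simp [mul_comm 2 k, frobenius_def]

lemma Sq_odd_sq (k : ℕ) (f : MvPolynomial σ kk) : Sq (2 * k + 1) (f ^ 2) = 0 := by
  rw [Sq_apply, map_pow, ← Polynomial.map_frobenius_expand, Polynomial.coeff_map,
    Polynomial.coeff_expand two_pos, if_neg (by omega), map_zero]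

lemma Sq_one_sq (f : MvPolynomial σ kk) : Sq 1 (f ^ 2) = 0 := Sq_odd_sq 0 f

lemma Sq_two_sq (f : MvPolynomial σ kk) : Sq 2 (f ^ 2) = Sq 1 f ^ 2 := Sq_even_sq 1 f

lemma Sq_succ_algebraMap (k : ℕ) (c : kk) :
    Sq (k + 1) (algebraMap kk (MvPolynomial σ kk) c) = 0 := by
  rw [Sq_apply, AlgHom.commutes, Polynomial.algebraMap_apply, Polynomial.coeff_C_succ]

lemma Sq_one_Sq_one (f : MvPolynomial σ kk) : Sq 1 (Sq 1 f) = 0 := by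
  induction f using MvPolynomial.induction_on with
  | C c => rw [← algebraMap_eq, Sq_succ_algebraMap 0, map_zero]
  | add p q hp hq => rw [map_add, map_add, hp, hq, add_zero]
  | mul_X p i hp =>
    rw [mul_comm, Sq_one_mul (isHomogeneous_X kk i), map_add, pow_two, mul_assoc,
      Sq_one_mul (isHomogeneous_X kk i), Sq_one_mul (isHomogeneous_X kk i),
      Sq_one_mul (isHomogeneous_X kk i), hp]
    linear_combination
      (X i ^ 2 * Sq 1 p + X i ^ 3 * p) * CharTwo.two_eq_zero (R := MvPolynomial σ kk)

lemma isHomogeneous_Sq {n : ℕ} (k : ℕ) {f : MvPolynomial σ kk} (hf : f.IsHomogeneous n) :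
    (Sq k f).IsHomogeneous (n + k) := by
  rw [← mem_homogeneousSubmodule, ← homogeneousSubmodule_one_pow] at hf
  induction hf using Submodule.pow_induction_on_left' generalizing k with
  | algebraMap c =>
    rcases k with _ | k
    · rw [Sq_zero]; exact isHomogeneous_C σ c
    · rw [Sq_succ_algebraMap]; exact isHomogeneous_zero ..
  | add f g n _ _ ihf ihg => rw [map_add]; exact (ihf k).add (ihg k)
  | mem_mul a ha n f hf ihf =>
    rcases k with _ | k
    · rw [Sq_zero, add_zero, Nat.succ_eq_add_one, add_comm]
      rw [homogeneousSubmodule_one_pow] at hf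
      exact ha.mul hf
    · rw [Sq_succ_mul ha]
      refine IsHomogeneous.add ?_ ?_
      · convert ha.mul (ihf (k + 1)) using 1; omega
      · convert (ha.pow 2).mul (ihf k) using 1; omega

/-- The hit polynomials of all degrees together, in arbitrarily many variables. -/
def hits (σ : Type*) : Submodule kk (MvPolynomial σ kk) :=
  Submodule.span kk {p | ∃ k g, p = Sq (k + 1) g}

lemma Sq_succ_mem_hits (k : ℕ) (g : MvPolynomial σ kk) : Sq (k + 1) g ∈ hits σ :=
  Submodule.subset_span ⟨k, g, rfl⟩

lemma hits_le_iff {N : Submodule kk (MvPolynomial σ kk)} :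
    hits σ ≤ N ↔ ∀ k g, Sq (k + 1) g ∈ N := by
  refine Submodule.span_le.trans ⟨fun h k g => h ⟨k, g, rfl⟩, ?_⟩
  rintro h _ ⟨k, g, rfl⟩
  exact h k g

/-- The quotient of the polynomial algebra by all hit polynomials: the direct sum of the cohit
spaces of all degrees. -/
abbrev Cohit (σ : Type*) := MvPolynomial σ kk ⧸ hits σ

/-- The class of a polynomial modulo hit polynomials. -/
abbrev cls : MvPolynomial σ kk →ₗ[kk] Cohit σ := (hits σ).mkQ

lemma cls_eq_zero {f : MvPolynomial σ kk} : cls f = 0 ↔ f ∈ hits σ :=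
  Submodule.Quotient.mk_eq_zero _

lemma cls_eq_cls {f g : MvPolynomial σ kk} : cls f = cls g ↔ f - g ∈ hits σ :=
  Submodule.Quotient.eq _

lemma cohit_add_eq_zero {x y : Cohit σ} : x + y = 0 ↔ x = y := by
  rw [← ZModModule.sub_eq_add, sub_eq_zero]

/-- The polynomial `a p²`, as a bilinear map in `a` and `p`. -/
def mulSq : MvPolynomial σ kk →ₗ[kk] MvPolynomial σ kk →ₗ[kk] MvPolynomial σ kk :=
  LinearMap.mk₂ kk (fun a p => a * p ^ 2)
    (fun a b p => add_mul a b (p ^ 2))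
    (fun c a p => smul_mul_assoc c a (p ^ 2))
    (fun a p q => by rw [CharTwo.add_sq, mul_add])
    (fun c a p => by rw [smul_pow, ZMod.pow_card, mul_smul_comm])

lemma mulSq_apply (a p : MvPolynomial σ kk) : mulSq a p = a * p ^ 2 := rfl

/-- The class of `a p²`, as a bilinear map in `a` and `p`. -/
def clsMulSq : MvPolynomial σ kk →ₗ[kk] MvPolynomial σ kk →ₗ[kk] Cohit σ := mulSq.compr₂ cls

lemma clsMulSq_apply (a p : MvPolynomial σ kk) : clsMulSq a p = cls (a * p ^ 2) := rfl

section Relations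

variable {a b c d : MvPolynomial σ kk} (ha : a.IsHomogeneous 1) (hb : b.IsHomogeneous 1)
  (hc : c.IsHomogeneous 1) (hd : d.IsHomogeneous 1)

include ha

lemma sq_mul_sq_mem_hits (g : MvPolynomial σ kk) : a ^ 2 * g ^ 2 ∈ hits σ := by
  have h := Sq_succ_mem_hits 0 (a * g ^ 2)
  rwa [Sq_one_mul ha, Sq_one_sq, mul_zero, zero_add] at h

lemma clsMulSq_eq_zero_of_mem_hits {p : MvPolynomial σ kk} (hp : p ∈ hits σ) :
    clsMulSq a p = 0 := by
  refine hits_le_iff (N := LinearMap.ker (clsMulSq a)) |>.2 (fun k g => ?_) hp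
  have h := Sq_succ_mem_hits (2 * k + 1) (a * g ^ 2)
  rwa [Sq_succ_mul ha, Sq_odd_sq, mul_zero, add_zero, ← cls_eq_zero,
    show 2 * k + 1 + 1 = 2 * (k + 1) by ring, Sq_even_sq] at h

lemma clsMulSq_congr {p q : MvPolynomial σ kk} (h : cls p = cls q) :
    clsMulSq a p = clsMulSq a q := by
  rw [← sub_eq_zero, ← map_sub]
  exact clsMulSq_eq_zero_of_mem_hits ha (cls_eq_cls.1 h)

include hb

lemma clsMulSq_swap (g : MvPolynomial σ kk) : clsMulSq a (b * g) = clsMulSq b (a * g) := by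
  rw [← cohit_add_eq_zero]
  simp only [clsMulSq_apply, ← map_add, cls_eq_zero]
  have h := Sq_succ_mem_hits 0 (a * (b * g ^ 2))
  rw [zero_add, Sq_one_mul ha, Sq_one_mul hb, Sq_one_sq] at h
  convert h using 1
  ring

lemma clsMulSq_mul_eq_zero_of_mem_hits {p : MvPolynomial σ kk} (hp : p ∈ hits σ) :
    clsMulSq (a * b) p = 0 := by
  refine hits_le_iff (N := LinearMap.ker (clsMulSq (a * b))) |>.2 (fun k g => ?_) hp
  have h := sub_mem (Sq_succ_mem_hits (2 * k + 1) (a * (b * g ^ 2)))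
    (sq_mul_sq_mem_hits ha (b * Sq k g))
  rw [Sq_succ_mul ha, Sq_succ_mul hb, Sq_succ_mul hb, Sq_odd_sq,
    show 2 * k + 1 + 1 = 2 * (k + 1) by ring, Sq_even_sq, Sq_even_sq] at h
  rw [LinearMap.mem_ker, clsMulSq_apply, cls_eq_zero]
  convert h using 1
  ring

lemma clsMulSq_mul_congr {p q : MvPolynomial σ kk} (h : cls p = cls q) :
    clsMulSq (a * b) p = clsMulSq (a * b) q := by
  rw [← sub_eq_zero, ← map_sub]
  exact clsMulSq_mul_eq_zero_of_mem_hits ha hb (cls_eq_cls.1 h)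

include hc

lemma clsMulSq_cyclic (g : MvPolynomial σ kk) :
    clsMulSq (a * b) (c * g) + clsMulSq (a * c) (b * g) + clsMulSq (b * c) (a * g) = 0 := by
  simp only [clsMulSq_apply, ← map_add, cls_eq_zero]
  have h := Sq_succ_mem_hits 0 (a * (b * (c * g ^ 2)))
  rw [zero_add, Sq_one_mul ha, Sq_one_mul hb, Sq_one_mul hc, Sq_one_sq] at h
  convert h using 1
  ring

lemma clsMulSq_Sq_one (g : MvPolynomial σ kk) :
    clsMulSq (a * b * c) (Sq 1 g) =
      clsMulSq a (b * c * g) + clsMulSq b (a * c * g) + clsMulSq c (a * b * g) := by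
  rw [← cohit_add_eq_zero]
  simp only [clsMulSq_apply, ← map_add, cls_eq_zero]
  have h := Sq_succ_mem_hits 1 (a * (b * (c * g ^ 2)))
  simp only [Nat.reduceAdd, Sq_two_mul, Sq_one_mul, ha, hb, hc, Sq_one_sq, Sq_two_sq] at h
  convert h using 1
  ring

omit ha hb hc

/-- The sum of the classes of `a b (c d p)²` over the six ways of splitting four factors into
two ordered pairs. -/
def pairSplitSum (a b c d : MvPolynomial σ kk) : MvPolynomial σ kk →ₗ[kk] Cohit σ :=
  clsMulSq (a * b) ∘ₗ LinearMap.mulLeft kk (c * d)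
    + clsMulSq (a * c) ∘ₗ LinearMap.mulLeft kk (b * d)
    + clsMulSq (a * d) ∘ₗ LinearMap.mulLeft kk (b * c)
    + clsMulSq (b * c) ∘ₗ LinearMap.mulLeft kk (a * d)
    + clsMulSq (b * d) ∘ₗ LinearMap.mulLeft kk (a * c)
    + clsMulSq (c * d) ∘ₗ LinearMap.mulLeft kk (a * b)

lemma pairSplitSum_apply (a b c d p : MvPolynomial σ kk) :
    pairSplitSum a b c d p =
      clsMulSq (a * b) (c * d * p) + clsMulSq (a * c) (b * d * p) + clsMulSq (a * d) (b * c * p)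
      + clsMulSq (b * c) (a * d * p) + clsMulSq (b * d) (a * c * p)
      + clsMulSq (c * d) (a * b * p) := rfl

include ha hb hc hd

lemma Sq_add_four_mul (n : ℕ) (f : MvPolynomial σ kk) :
    Sq (n + 4) (a * (b * (c * (d * f)))) = a * b * c * d *
      (Sq (n + 4) f + (a + b + c + d) * Sq (n + 3) f
        + (a * b + a * c + a * d + b * c + b * d + c * d) * Sq (n + 2) f
        + (a * b * c + a * b * d + a * c * d + b * c * d) * Sq (n + 1) f
        + a * b * c * d * Sq n f) := by
  simp only [show n + 4 = n + 1 + 1 + 1 + 1 from rfl, show n + 3 = n + 1 + 1 + 1 from rfl,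
    show n + 2 = n + 1 + 1 from rfl, Sq_succ_mul, ha, hb, hc, hd]
  ring

lemma clsMulSq_Sq_succ (k : ℕ) (h : MvPolynomial σ kk) :
    clsMulSq (a * b * c * d) (Sq (k + 1) h) = pairSplitSum a b c d (Sq k h) := by
  rw [← cohit_add_eq_zero]
  simp only [pairSplitSum_apply, clsMulSq_apply, ← map_add, cls_eq_zero]
  rcases k with _ | k
  · have h2 := Sq_succ_mem_hits 1 (a * (b * (c * (d * h ^ 2))))
    simp only [Nat.reduceAdd, Sq_two_mul, Sq_one_mul, ha, hb, hc, hd, Sq_one_sq, Sq_two_sq] at h2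
    simp only [zero_add, Sq_zero]
    convert h2 using 1
    ring
  · have h2 := sub_mem (Sq_succ_mem_hits (2 * k + 3) (a * (b * (c * (d * h ^ 2)))))
      (sq_mul_sq_mem_hits ha (b * c * d * Sq k h))
    rw [Sq_add_four_mul ha hb hc hd, Sq_even_sq, Sq_odd_sq,
      show 2 * k + 4 = 2 * (k + 2) by ring, show 2 * k + 3 = 2 * (k + 1) + 1 by ring,
      show 2 * k + 2 = 2 * (k + 1) by ring, Sq_even_sq, Sq_odd_sq, Sq_even_sq] at h2
    convert h2 using 1
    ring

lemma pairSplitSum_add_Sq_one {h₁ h₂ : MvPolynomial σ kk} (h : Sq 1 h₁ = Sq 2 h₂) :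
    pairSplitSum a b c d (h₁ + Sq 1 h₂) = 0 := by
  rw [map_add, ← clsMulSq_Sq_succ ha hb hc hd 1 h₂, ← h, ← Sq_zero h₁,
    ← clsMulSq_Sq_succ ha hb hc hd 0 h₁, Sq_zero, zero_add]
  exact ZModModule.add_self _

end Relations

end SteenrodSquares

section Substitution

variable {σ τ : Type*}

lemma algHom_Sq {φ : MvPolynomial σ kk →ₐ[kk] MvPolynomial τ kk}
    (hφ : ∀ i, (φ (X i)).IsHomogeneous 1) (k : ℕ) (f : MvPolynomial σ kk) :
    φ (Sq k f) = Sq k (φ f) := by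
  have h : (Polynomial.mapAlgHom φ).comp sqSeries = sqSeries.comp φ := algHom_ext fun i => by
    rw [AlgHom.comp_apply, AlgHom.comp_apply, sqSeries_of_isHomogeneous_one (hφ i),
      sqSeries_of_isHomogeneous_one (isHomogeneous_X kk i)]
    simp
  rw [Sq_apply, Sq_apply, ← AlgHom.comp_apply sqSeries, ← h]
  simp

lemma algHom_mem_hits {φ : MvPolynomial σ kk →ₐ[kk] MvPolynomial τ kk}
    (hφ : ∀ i, (φ (X i)).IsHomogeneous 1) {f : MvPolynomial σ kk} (hf : f ∈ hits σ) :
    φ f ∈ hits τ := by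
  refine (hits_le_iff (N := (hits τ).comap φ.toLinearMap)).2 (fun k g => ?_) hf
  rw [Submodule.mem_comap, AlgHom.toLinearMap_apply, algHom_Sq hφ]
  exact Sq_succ_mem_hits k (φ g)

/-- The linear form `∑ αᵢ xᵢ` with coefficient vector `α`. -/
def linForm [Fintype σ] : (σ → kk) →ₗ[kk] MvPolynomial σ kk := Fintype.linearCombination kk X

lemma linForm_apply [Fintype σ] (α : σ → kk) : linForm α = ∑ i, α i • X i := rfl

lemma linForm_single [Fintype σ] [DecidableEq σ] (i : σ) : linForm (Pi.single i 1) = X i := by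
  simp [linForm, Fintype.linearCombination_apply_single]

lemma isHomogeneous_linForm [Fintype σ] (α : σ → kk) : (linForm α).IsHomogeneous 1 :=
  Submodule.sum_mem (homogeneousSubmodule σ kk 1) fun i _ =>
    Submodule.smul_mem _ (α i) (isHomogeneous_X kk i)

lemma eval_linForm [Fintype σ] (v α : σ → kk) : eval v (linForm α) = α ⬝ᵥ v := by
  simp [linForm_apply, dotProduct, smul_eval]

lemma substM_X (M : Matrix (Fin 4) (Fin 4) kk) (i : Fin 4) : substM M (X i) = linForm (M i) := by
  simp [substM, linForm_apply]

lemma isHomogeneous_substM_X (M : Matrix (Fin 4) (Fin 4) kk) (i : Fin 4) :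
    (substM M (X i)).IsHomogeneous 1 := by
  rw [substM_X]
  exact isHomogeneous_linForm _

lemma isHomogeneous_substM (M : Matrix (Fin 4) (Fin 4) kk) {n : ℕ} {f : P4}
    (hf : f.IsHomogeneous n) : (substM M f).IsHomogeneous n := by
  rw [← one_mul n]
  exact hf.aeval _ fun i => isHomogeneous_linForm (M i)

end Substitution

section HitSubspace

lemma sqTotal_eq_eval_sqSeries (f : P4) : sqTotal f = (sqSeries f).eval 1 := by
  have h : ((Polynomial.aeval (1 : P4)).restrictScalars kk).comp (sqSeries (σ := Fin 4)) =
      sqTotal := algHom_ext fun i => by simp [sqSeries, sqTotal]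
  simpa [Polynomial.coe_aeval_eq_eval] using (DFunLike.congr_fun h f).symm

lemma homogeneousComponent_sqTotal {n : ℕ} (k : ℕ) {f : P4} (hf : f.IsHomogeneous n) :
    homogeneousComponent (n + k) (sqTotal f) = Sq k f := by
  have component_coeff (j : ℕ) : homogeneousComponent (n + k) ((sqSeries f).coeff j) =
      if k = j then Sq k f else 0 := by
    rw [← Sq_apply, homogeneousComponent_of_mem (isHomogeneous_Sq j hf)]
    simp only [add_right_inj]
    split_ifs with h
    · rw [h]
    · rfl
  rw [sqTotal_eq_eval_sqSeries, Polynomial.eval_eq_sum, Polynomial.sum, map_sum]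
  simp only [one_pow, mul_one, component_coeff, Finset.sum_ite_eq]
  split_ifs with h
  · rfl
  · exact (Polynomial.notMem_support_iff.1 h).symm

lemma hitSub_le_hits (n : ℕ) : hitSub n ≤ hits (Fin 4) := by
  refine Submodule.span_le.2 ?_
  rintro _ ⟨d, hd, g, hg, rfl⟩
  obtain ⟨k, rfl⟩ := Nat.exists_eq_add_of_lt hd
  rw [add_assoc, homogeneousComponent_sqTotal (k + 1) hg]
  exact Sq_succ_mem_hits k g

lemma homogeneousComponent_mem_hitSub (n : ℕ) {f : P4} (hf : f ∈ hits (Fin 4)) :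
    homogeneousComponent n f ∈ hitSub n := by
  refine (hits_le_iff (N := (hitSub n).comap (homogeneousComponent n))).2 (fun k g => ?_) hf
  rw [Submodule.mem_comap, ← sum_homogeneousComponent g, map_sum, map_sum]
  refine Submodule.sum_mem _ fun i _ => ?_
  have hi := homogeneousComponent_mem i g
  rw [homogeneousComponent_of_mem (isHomogeneous_Sq (k + 1) hi)]
  split_ifs with h
  · subst h
    rw [← homogeneousComponent_sqTotal _ hi]
    exact Submodule.subset_span ⟨i, by omega, _, hi, rfl⟩
  · exact zero_mem _

lemma mem_hitSub_iff {n : ℕ} {f : P4} (hf : f.IsHomogeneous n) :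
    f ∈ hitSub n ↔ f ∈ hits (Fin 4) :=
  ⟨fun h => hitSub_le_hits n h, fun h =>
    homogeneousComponent_eq_self hf ▸ homogeneousComponent_mem_hitSub n h⟩

end HitSubspace

section Lists

variable {α : Type*}

lemma exists_mem_perm_cons_of_not_nodup {l : List α} (h : ¬ l.Nodup) :
    ∃ i l', i ∈ l' ∧ l.Perm (i :: l') := by
  classical
  obtain ⟨x, hx⟩ := List.exists_duplicate_iff_not_nodup.2 h
  refine ⟨x, l.erase x, ?_, List.perm_cons_erase hx.mem⟩
  rw [← List.count_pos_iff, List.count_erase_self]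
  have := List.duplicate_iff_two_le_count.1 hx
  omega

lemma toFinset_eq_of_perm_cons [DecidableEq α] {i : α} {l l' : List α} (hi : i ∈ l')
    (h : l.Perm (i :: l')) : l.toFinset = l'.toFinset := by
  rw [List.toFinset_eq_of_perm _ _ h, List.toFinset_cons,
    Finset.insert_eq_of_mem (List.mem_toFinset.2 hi)]

lemma card_toFinset_eq_length_iff [DecidableEq α] {l : List α} :
    l.toFinset.card = l.length ↔ l.Nodup :=
  Multiset.toFinset_card_eq_card_iff_nodup (m := (l : Multiset α))

/-- A list of length `n` with set of entries `S`: an enumeration of `S` followed by copies of its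
first entry. Meaningful for `0 < #S ≤ n`. -/
def paddedList [Inhabited α] (n : ℕ) (S : Finset α) : List α :=
  S.toList ++ List.replicate (n - S.card) S.toList.headI

lemma length_paddedList [Inhabited α] {n : ℕ} {S : Finset α} (hn : S.card ≤ n) :
    (paddedList n S).length = n := by
  simp [paddedList, hn]

lemma toFinset_paddedList [Inhabited α] [DecidableEq α] (n : ℕ) {S : Finset α}
    (hS : S.Nonempty) : (paddedList n S).toFinset = S := by
  have hhead : S.toList.headI ∈ S := by
    rw [← Finset.mem_toList]
    cases h : S.toList with
    | nil => exact absurd (Finset.toList_eq_nil.1 h) hS.ne_empty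
    | cons i l => exact List.mem_cons_self
  ext i
  simp only [paddedList, List.mem_toFinset, List.mem_append, Finset.mem_toList,
    List.mem_replicate, or_iff_left_iff_imp]
  rintro ⟨-, rfl⟩
  exact hhead

end Lists

section ListFunctions

variable {α β : Type*} {F : List α → β}
  (cons_congr : ∀ i l l', F l = F l' → F (i :: l) = F (i :: l'))
  (swap : ∀ i j l, F (i :: j :: l) = F (j :: i :: l))
  (exchange : ∀ i j l, F (i :: i :: j :: l) = F (j :: j :: i :: l))

include cons_congr swap

lemma apply_eq_of_perm {l l' : List α} (h : l.Perm l') : F l = F l' := by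
  induction h with
  | nil => rfl
  | cons i _ ih => exact cons_congr _ _ _ ih
  | swap i j l => exact swap _ _ _
  | trans _ _ h₁ h₂ => exact h₁.trans h₂

include exchange

lemma apply_cons_eq_apply_cons_of_mem {i j : α} {l : List α} (hi : i ∈ l)
    (hj : j ∈ l) : F (i :: l) = F (j :: l) := by
  classical
  obtain rfl | hij := eq_or_ne i j
  · rfl
  have hj' : j ∈ l.erase i := (List.mem_erase_of_ne hij.symm).2 hj
  have hl : l.Perm (i :: j :: (l.erase i).erase j) :=
    (List.perm_cons_erase hi).trans ((List.perm_cons_erase hj').cons i)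
  rw [apply_eq_of_perm cons_congr swap (hl.cons i), apply_eq_of_perm cons_congr swap (hl.cons j),
    exchange]
  exact cons_congr _ _ _ (swap _ _ _)

-- A repeated letter may be traded for any other letter that occurs, so the lists can be matched
-- up by removing one repeated letter at a time.
theorem apply_eq_of_length_eq_of_toFinset_eq [DecidableEq α] {l l' : List α}
    (hlength : l.length = l'.length) (htoFinset : l.toFinset = l'.toFinset) : F l = F l' := by
  induction hn : l.length generalizing l l' with
  | zero =>
    rw [List.eq_nil_of_length_eq_zero hn, List.eq_nil_of_length_eq_zero (hlength.symm.trans hn)]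
  | succ n ih =>
    by_cases hl : l.Nodup
    · have hl' : l'.Nodup := by
        rw [← card_toFinset_eq_length_iff] at hl ⊢
        rw [← htoFinset, hl, hlength]
      exact apply_eq_of_perm cons_congr swap
        (List.perm_of_nodup_nodup_toFinset_eq hl hl' htoFinset)
    · have hl' : ¬ l'.Nodup := by
        rw [← card_toFinset_eq_length_iff] at hl ⊢
        rwa [← htoFinset, ← hlength]
      obtain ⟨i, l₁, hi, hperm⟩ := exists_mem_perm_cons_of_not_nodup hl
      obtain ⟨j, l₂, hj, hperm'⟩ := exists_mem_perm_cons_of_not_nodup hl'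
      rw [toFinset_eq_of_perm_cons hi hperm, toFinset_eq_of_perm_cons hj hperm'] at htoFinset
      have hlen₁ := hperm.length_eq
      have hlen₂ := hperm'.length_eq
      rw [List.length_cons] at hlen₁ hlen₂
      rw [apply_eq_of_perm cons_congr swap hperm, apply_eq_of_perm cons_congr swap hperm',
        apply_cons_eq_apply_cons_of_mem cons_congr swap exchange hi
          (List.mem_toFinset.1 (htoFinset ▸ List.mem_toFinset.2 hj))]
      exact cons_congr _ _ _ (ih (by omega) htoFinset (by omega))

end ListFunctions

section Words

variable {σ : Type*}

/-- The iterated product `x_{i₁} (x_{i₂} (⋯)²)²`. -/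
def word : List σ → MvPolynomial σ kk
  | [] => 1
  | i :: l => X i * word l ^ 2

theorem cls_word_congr [DecidableEq σ] {l l' : List σ} (hlength : l.length = l'.length)
    (htoFinset : l.toFinset = l'.toFinset) : cls (word l) = cls (word l') := by
  refine apply_eq_of_length_eq_of_toFinset_eq (F := fun l => cls (word l)) (fun i l l' h => ?_)
    (fun i j l => ?_) (fun i j l => ?_) hlength htoFinset
  · exact clsMulSq_congr (isHomogeneous_X kk i) h
  · exact clsMulSq_swap (isHomogeneous_X kk i) (isHomogeneous_X kk j) _
  · convert clsMulSq_swap (isHomogeneous_X kk i) (isHomogeneous_X kk j)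
      (X i * X j * word l ^ 4) using 1 <;>
    simp only [word, clsMulSq_apply] <;> ring_nf

/-- `x` is the class of a word of length `n` whose set of letters is `S`. -/
def IsWordClass [DecidableEq σ] (n : ℕ) (S : Finset σ) (x : Cohit σ) : Prop :=
  ∃ l : List σ, l.length = n ∧ l.toFinset = S ∧ cls (word l) = x

lemma IsWordClass.cons [DecidableEq σ] {n : ℕ} {S : Finset σ} {f : MvPolynomial σ kk}
    (h : IsWordClass n S (cls f)) (i : σ) :
    IsWordClass (n + 1) (insert i S) (clsMulSq (X i) f) := by
  obtain ⟨l, rfl, rfl, hl⟩ := h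
  exact ⟨i :: l, rfl, List.toFinset_cons, clsMulSq_congr (isHomogeneous_X kk i) hl⟩

lemma IsWordClass.unique [DecidableEq σ] {n : ℕ} {S : Finset σ} {x y : Cohit σ}
    (hx : IsWordClass n S x) (hy : IsWordClass n S y) : x = y := by
  obtain ⟨l, hn, hS, rfl⟩ := hx
  obtain ⟨l', hn', hS', rfl⟩ := hy
  exact cls_word_congr (hn.trans hn'.symm) (hS.trans hS'.symm)

lemma isWordClass_paddedList [DecidableEq σ] [Inhabited σ] {n : ℕ} {S : Finset σ}
    (hS : S.Nonempty) (hn : S.card ≤ n) : IsWordClass n S (cls (word (paddedList n S))) :=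
  ⟨_, length_paddedList hn, toFinset_paddedList n hS, rfl⟩

lemma IsWordClass.eq_paddedList [DecidableEq σ] [Inhabited σ] {n : ℕ} {S : Finset σ} {x : Cohit σ}
    (hx : IsWordClass (n + 1) S x) : x = cls (word (paddedList (n + 1) S)) := by
  obtain ⟨l, hn, rfl, rfl⟩ := hx
  have hl : l.toFinset.Nonempty := List.toFinset_nonempty_iff l |>.2 (by rintro rfl; simp at hn)
  refine IsWordClass.unique ⟨l, hn, rfl, rfl⟩ (isWordClass_paddedList hl ?_)
  exact hn ▸ l.toFinset_card_le

end Words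

section Exponents

variable {σ : Type*}

/-- The exponent vector of the variable `x_i`. -/
abbrev ε (i : σ) : σ →₀ ℕ := Finsupp.single i 1

/-- The monomial with exponent vector `c`. -/
abbrev mon (c : σ →₀ ℕ) : MvPolynomial σ kk := monomial c 1

lemma mon_add (c d : σ →₀ ℕ) : mon (c + d) = mon c * mon d := by
  rw [monomial_mul, one_mul]

lemma mon_ε (i : σ) : mon (ε i) = X i := rfl

lemma mon_two_smul (c : σ →₀ ℕ) : mon (2 • c) = mon c ^ 2 := by
  rw [monomial_pow, one_pow]

lemma support_add_eq_union [DecidableEq σ] (c d : σ →₀ ℕ) :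
    (c + d).support = c.support ∪ d.support := by
  ext i
  simp only [Finsupp.mem_support_iff, Finsupp.add_apply, Finset.mem_union]
  omega

lemma support_two_smul (c : σ →₀ ℕ) : (2 • c).support = c.support :=
  Finsupp.support_smul_eq two_ne_zero

lemma support_ε (i : σ) : (ε i).support = {i} := Finsupp.support_single i one_ne_zero

lemma exists_eq_ε_add_of_ne_zero {c : σ →₀ ℕ} {i : σ} (h : c i ≠ 0) : ∃ d, c = ε i + d :=
  ⟨c - ε i, (add_tsub_cancel_of_le (Finsupp.single_le_iff.2 (Nat.one_le_iff_ne_zero.2 h))).symm⟩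

lemma exists_eq_ε_add {c : σ →₀ ℕ} (h : c.degree ≠ 0) : ∃ i d, c = ε i + d := by
  obtain ⟨i, hi⟩ := Finsupp.ne_iff.1 ((Finsupp.degree_eq_zero_iff c).not.1 h)
  exact ⟨i, exists_eq_ε_add_of_ne_zero hi⟩

lemma exists_eq_sum_ε_add_two_smul (c : σ →₀ ℕ) :
    ∃ (S : Finset σ) (e : σ →₀ ℕ), c = ∑ i ∈ S, ε i + 2 • e := by
  classical
  refine ⟨{i ∈ c.support | c i % 2 = 1}, c.mapRange (· / 2) (Nat.zero_div 2), ?_⟩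
  ext i
  simp only [Finsupp.coe_add, Finsupp.coe_finsetSum, Pi.add_apply, Finset.sum_apply,
    Finsupp.single_apply, Finset.sum_ite_eq', Finset.mem_filter, Finsupp.mem_support_iff,
    Finsupp.smul_apply, Finsupp.mapRange_apply, smul_eq_mul]
  split_ifs <;> omega

lemma homogeneousSubmodule_eq_span_mon (n : ℕ) :
    homogeneousSubmodule σ kk n = Submodule.span kk (mon '' {c | c.degree = n}) := by
  rw [homogeneousSubmodule_eq_finsupp_supported, AddMonoidAlgebra.supported_eq_span_single]
  rfl

lemma cls_mon_two_smul {e : σ →₀ ℕ} (he : e.degree ≠ 0) : cls (mon (2 • e)) = 0 := by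
  obtain ⟨i, d, rfl⟩ := exists_eq_ε_add he
  rw [mon_two_smul, mon_add, mul_pow]
  exact cls_eq_zero.2 (sq_mul_sq_mem_hits (isHomogeneous_X kk i) _)

lemma degree_sum_ε (S : Finset σ) : (∑ i ∈ S, ε i).degree = S.card := by
  simp [map_sum]

end Exponents

section DegreeParity

/-- The exponent vector of the product of the three variables other than `x_m`. -/
def triple (m : Fin 4) : Fin 4 →₀ ℕ := ∑ i ∈ {m}ᶜ, ε i

variable {i j k l : Fin 4}

lemma triple_eq (h : [i, j, k, l].Nodup) : triple l = ε i + ε j + ε k := by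
  have hcompl : ∀ i j k l : Fin 4, [i, j, k, l].Nodup → ({l}ᶜ : Finset (Fin 4)) = {i, j, k} := by
    decide
  simp only [List.nodup_cons, List.mem_cons, List.not_mem_nil, not_or] at h
  rw [triple, hcompl i j k l (by simp [h]), Finset.sum_insert (by simp [h]),
    Finset.sum_pair h.2.1.1, add_assoc]

lemma degree_triple (m : Fin 4) : (triple m).degree = 3 := by
  rw [triple, degree_sum_ε, Finset.card_compl, Finset.card_singleton, Fintype.card_fin]

lemma exists_nodup_of_ne : ∀ {i j : Fin 4}, i ≠ j → ∃ k l, [i, j, k, l].Nodup := by decide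

lemma exists_nodup_of_ne_of_ne :
    ∀ {i j k : Fin 4}, i ≠ j → i ≠ k → j ≠ k → ∃ l, [i, j, k, l].Nodup := by decide

lemma eq_ε_add_or_eq_triple_add_of_odd {c : Fin 4 →₀ ℕ} (hc : Odd c.degree) :
    (∃ k e, c = ε k + 2 • e) ∨ ∃ m e, c = triple m + 2 • e := by
  obtain ⟨S, e, rfl⟩ := exists_eq_sum_ε_add_two_smul c
  have hS : Odd S.card := by
    simp only [map_add, map_nsmul, degree_sum_ε, Nat.odd_add, smul_eq_mul, even_two_mul,
      iff_true] at hc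
    exact hc
  have hcompl : Sᶜ.card + S.card = 4 := by simp [Finset.card_compl_add_card]
  obtain h | h : S.card = 1 ∨ Sᶜ.card = 1 := by
    obtain ⟨n, hn⟩ := hS
    omega
  · obtain ⟨k, rfl⟩ := Finset.card_eq_one.1 h
    exact Or.inl ⟨k, e, by rw [Finset.sum_singleton]⟩
  · obtain ⟨m, hm⟩ := Finset.card_eq_one.1 h
    exact Or.inr ⟨m, e, by rw [triple, ← hm, compl_compl]⟩

lemma eq_two_smul_or_eq_pair_add_or_eq_univ_add_of_even {c : Fin 4 →₀ ℕ} (hc : Even c.degree) :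
    (∃ e, c = 2 • e) ∨ (∃ i j e, c = ε i + ε j + 2 • e) ∨ ∃ e, c = ∑ i, ε i + 2 • e := by
  obtain ⟨S, e, rfl⟩ := exists_eq_sum_ε_add_two_smul c
  have hS : Even S.card := by
    simp only [map_add, map_nsmul, degree_sum_ε, Nat.even_add, smul_eq_mul, even_two_mul,
      iff_true] at hc
    exact hc
  have hle : S.card ≤ 4 := Finset.card_le_univ S
  obtain h | h | h : S.card = 0 ∨ S.card = 2 ∨ S.card = 4 := by
    obtain ⟨n, hn⟩ := hS
    omega
  · obtain rfl := Finset.card_eq_zero.1 h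
    exact Or.inl ⟨e, by rw [Finset.sum_empty, zero_add]⟩
  · obtain ⟨i, j, hij, rfl⟩ := Finset.card_eq_two.1 h
    exact Or.inr (Or.inl ⟨i, j, e, by rw [Finset.sum_pair hij]⟩)
  · obtain rfl := Finset.eq_univ_of_card S h
    exact Or.inr (Or.inr ⟨e, rfl⟩)

end DegreeParity

section PairWords

variable {r : ℕ}

lemma isWordClass_mul_triple_of_ne
    (ih : ∀ (i j : Fin 4) (e : Fin 4 →₀ ℕ), e.degree + 1 = 2 ^ r →
      IsWordClass (r + 2) ({i, j} ∪ e.support) (clsMulSq (X i) (X j * mon e ^ 2)))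
    {i j m : Fin 4} {e : Fin 4 →₀ ℕ} (he : e.degree + 2 = 2 ^ r) (h : j ≠ m) :
    IsWordClass (r + 3) ({i, j} ∪ (triple m + 2 • e).support)
      (clsMulSq (X i) (X j * mon (triple m + 2 • e) ^ 2)) := by
  obtain ⟨k, l, hnodup⟩ := exists_nodup_of_ne h
  have htriple : triple m = ε j + ε k + ε l := triple_eq (by grind)
  have hswap :
      cls (X j * mon (triple m + 2 • e) ^ 2) = cls (X k * (X l * mon (ε j + e) ^ 2) ^ 2) := by
    have := clsMulSq_swap (isHomogeneous_X kk j) (isHomogeneous_X kk k) (X j * X l * mon e ^ 2)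
    simp only [htriple, mon_add, mon_two_smul, mon_ε, clsMulSq_apply] at this ⊢
    convert this using 2 <;> ring
  rw [clsMulSq_congr (isHomogeneous_X kk i) hswap]
  convert (ih k l (ε j + e) (by rw [map_add, Finsupp.degree_single]; omega)).cons
    (f := X k * _ ^ 2) i using 1
  ext x
  simp only [htriple, support_add_eq_union, support_two_smul, support_ε, Finset.mem_union,
    Finset.mem_insert, Finset.mem_singleton]
  tauto

lemma isWordClass_mul_triple
    (ih : ∀ (i j : Fin 4) (e : Fin 4 →₀ ℕ), e.degree + 1 = 2 ^ r →
      IsWordClass (r + 2) ({i, j} ∪ e.support) (clsMulSq (X i) (X j * mon e ^ 2)))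
    (i j m : Fin 4) {e : Fin 4 →₀ ℕ} (he : e.degree + 2 = 2 ^ r) :
    IsWordClass (r + 3) ({i, j} ∪ (triple m + 2 • e).support)
      (clsMulSq (X i) (X j * mon (triple m + 2 • e) ^ 2)) := by
  have of_ne (i j m : Fin 4) (h : i ≠ m) : IsWordClass (r + 3) ({i, j} ∪ (triple m + 2 • e).support)
      (clsMulSq (X i) (X j * mon (triple m + 2 • e) ^ 2)) := by
    rw [clsMulSq_swap (isHomogeneous_X kk i) (isHomogeneous_X kk j), Finset.pair_comm]
    exact isWordClass_mul_triple_of_ne ih he h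
  by_cases hj : j = m
  swap
  · exact isWordClass_mul_triple_of_ne ih he hj
  by_cases hi : i = m
  swap
  · exact of_ne i j m hi
  subst hj hi
  obtain ⟨a, ha⟩ := exists_ne i
  obtain ⟨b, d, hnodup⟩ := exists_nodup_of_ne ha
  have hi : triple i = ε a + ε b + ε d := triple_eq (by grind)
  have ha' : triple a = ε i + ε b + ε d := triple_eq (by grind)
  have hswap : cls (X i * mon (triple i + 2 • e) ^ 2) = cls (X a * mon (triple a + 2 • e) ^ 2) := by
    have := clsMulSq_swap (isHomogeneous_X kk i) (isHomogeneous_X kk a) (X b * X d * mon e ^ 2)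
    simp only [hi, ha', mon_add, mon_two_smul, mon_ε, clsMulSq_apply] at this ⊢
    convert this using 2 <;> ring
  rw [clsMulSq_congr (isHomogeneous_X kk i) hswap]
  convert of_ne i a a ha.symm using 1
  ext x
  simp only [hi, ha', support_add_eq_union, support_two_smul, support_ε, Finset.mem_union,
    Finset.mem_insert, Finset.mem_singleton]
  tauto

theorem isWordClass_mul_mon_sq (i j : Fin 4) {c : Fin 4 →₀ ℕ} (hc : c.degree + 1 = 2 ^ r) :
    IsWordClass (r + 2) ({i, j} ∪ c.support) (clsMulSq (X i) (X j * mon c ^ 2)) := by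
  induction r generalizing i j c with
  | zero =>
    obtain rfl := (Finsupp.degree_eq_zero_iff c).1 (by omega)
    refine ⟨[i, j], rfl, by simp, ?_⟩
    simp [word, clsMulSq_apply, mon]
  | succ r ih =>
    rw [pow_succ] at hc
    obtain ⟨k, e, rfl⟩ | ⟨m, e, rfl⟩ :=
      eq_ε_add_or_eq_triple_add_of_odd (c := c) ⟨2 ^ r - 1, by have := Nat.two_pow_pos r; omega⟩
    · simp only [map_add, map_nsmul, Finsupp.degree_single, smul_eq_mul] at hc
      rw [mon_add, mon_two_smul, mon_ε]
      convert (ih j k (c := e) (by omega)).cons (f := X j * _ ^ 2) i using 1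
      simp only [support_add_eq_union, support_two_smul, support_ε, Finset.insert_eq,
        Finset.union_assoc]
    · simp only [map_add, map_nsmul, degree_triple, smul_eq_mul] at hc
      exact isWordClass_mul_triple (fun i j e => ih i j) i j m (by omega)

end PairWords

section WordDefect

/-- The obstruction to replacing, in the class of `x_a x_b (x^c)²`, the monomial `x^c` of degree
`2^(r+2) - 1` by the word of length `r + 2` with the same set of variables. -/
def wordDefect (r : ℕ) (a b : Fin 4) (c : Fin 4 →₀ ℕ) : Cohit (Fin 4) :=
  clsMulSq (X a * X b) (mon c + word (paddedList (r + 2) c.support))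

variable {r : ℕ} {a b : Fin 4}

lemma wordDefect_comm (r : ℕ) (a b : Fin 4) (c : Fin 4 →₀ ℕ) :
    wordDefect r a b c = wordDefect r b a c := by
  rw [wordDefect, mul_comm (X a), ← wordDefect]

lemma wordDefect_congr {c d : Fin 4 →₀ ℕ} (hcls : cls (mon c) = cls (mon d))
    (hsupport : c.support = d.support) : wordDefect r a b c = wordDefect r a b d := by
  rw [wordDefect, wordDefect, hsupport]
  exact clsMulSq_mul_congr (isHomogeneous_X kk a) (isHomogeneous_X kk b)
    (by rw [map_add, map_add, hcls])

lemma wordDefect_add {c d : Fin 4 →₀ ℕ} (hsupport : c.support = d.support) :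
    wordDefect r a b c + wordDefect r a b d = clsMulSq (X a * X b) (mon c + mon d) := by
  rw [wordDefect, wordDefect, hsupport, ← map_add, add_add_add_comm, ZModModule.add_self, add_zero]

lemma wordDefect_eq_add_add {c c₁ c₂ c₃ : Fin 4 →₀ ℕ}
    (hcls : cls (mon c) = cls (mon c₁) + cls (mon c₂) + cls (mon c₃)) (h₁ : c₁.support = c.support)
    (h₂ : c₂.support = c.support) (h₃ : c₃.support = c.support) :
    wordDefect r a b c = wordDefect r a b c₁ + wordDefect r a b c₂ + wordDefect r a b c₃ := by
  simp only [wordDefect, h₁, h₂, h₃, ← map_add]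
  refine clsMulSq_mul_congr (isHomogeneous_X kk a) (isHomogeneous_X kk b) ?_
  simp only [map_add, hcls]
  generalize cls (word (paddedList (r + 2) c.support)) = w
  rw [add_add_add_comm (cls (mon c₁)), ZModModule.add_self, add_zero, add_assoc]

lemma wordDefect_eq_zero_of_isWordClass {c : Fin 4 →₀ ℕ}
    (h : IsWordClass (r + 2) c.support (cls (mon c))) : wordDefect r a b c = 0 := by
  rw [wordDefect, map_add, cohit_add_eq_zero]
  exact clsMulSq_mul_congr (isHomogeneous_X kk a) (isHomogeneous_X kk b) h.eq_paddedList

lemma wordDefect_swap (i j : Fin 4) (g : Fin 4 →₀ ℕ) :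
    wordDefect r a b (ε i + 2 • (ε j + g)) = wordDefect r a b (ε j + 2 • (ε i + g)) := by
  refine wordDefect_congr ?_ ?_
  · simp only [mon_add, mon_two_smul, mon_ε]
    exact clsMulSq_swap (isHomogeneous_X kk i) (isHomogeneous_X kk j) (mon g)
  · simp only [support_add_eq_union, support_two_smul, support_ε, Finset.union_left_comm]

lemma wordDefect_ε_add_two_ε_add_four (i j : Fin 4) {c : Fin 4 →₀ ℕ} (hc : c.degree + 1 = 2 ^ r) :
    wordDefect r a b (ε i + 2 • (ε j + 2 • c)) = 0 := by
  refine wordDefect_eq_zero_of_isWordClass ?_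
  simp only [mon_add, mon_two_smul, mon_ε]
  rw [← clsMulSq_apply]
  convert isWordClass_mul_mon_sq i j hc using 1
  simp only [support_add_eq_union, support_two_smul, support_ε, Finset.insert_eq,
    Finset.union_assoc]

lemma wordDefect_ε_add_two_triple_add_four_of_ne {i m : Fin 4} {u : Fin 4 →₀ ℕ}
    (hu : u.degree + 2 = 2 ^ r) (him : i ≠ m) :
    wordDefect r a b (ε i + 2 • (triple m + 2 • u)) = 0 := by
  obtain ⟨j, k, hnodup⟩ := exists_nodup_of_ne him
  have htriple : triple m = ε i + ε j + ε k := triple_eq (by grind)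
  calc wordDefect r a b (ε i + 2 • (triple m + 2 • u))
      = wordDefect r a b (ε i + 2 • (ε j + (ε i + ε k + 2 • u))) := by
        congr 3; rw [htriple]; abel
    _ = wordDefect r a b (ε j + 2 • (ε k + 2 • (ε i + u))) := by
        rw [wordDefect_swap]; congr 3; module
    _ = 0 := wordDefect_ε_add_two_ε_add_four j k (by rw [map_add, Finsupp.degree_single]; omega)

lemma wordDefect_ε_add_two_triple_comm (i p : Fin 4) (u : Fin 4 →₀ ℕ) :
    wordDefect r a b (ε i + 2 • (triple i + 2 • u)) =
      wordDefect r a b (ε p + 2 • (triple p + 2 • u)) := by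
  obtain rfl | hip := eq_or_ne i p
  · rfl
  obtain ⟨x, y, hnodup⟩ := exists_nodup_of_ne hip
  have hi : triple i = ε p + ε x + ε y := triple_eq (by grind)
  have hp : triple p = ε i + ε x + ε y := triple_eq (by grind)
  calc wordDefect r a b (ε i + 2 • (triple i + 2 • u))
      = wordDefect r a b (ε i + 2 • (ε p + (ε x + ε y + 2 • u))) := by
        congr 3; rw [hi]; abel
    _ = wordDefect r a b (ε p + 2 • (triple p + 2 • u)) := by
        rw [wordDefect_swap, hp]; congr 3; abel

section

variable (hr : 3 ≤ r)
include hr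

lemma cls_word_paddedList_ε_add (i : Fin 4) {g : Fin 4 →₀ ℕ} (hg : g.degree ≠ 0) :
    cls (word (paddedList (r + 2) (ε i + g).support)) =
      cls (X i * word (paddedList (r + 1) g.support) ^ 2) := by
  have hcard (S : Finset (Fin 4)) : S.card ≤ 4 := S.card_le_univ
  have hsupport : g.support.Nonempty :=
    Finsupp.support_nonempty_iff.2 fun h => hg (by rw [h, map_zero])
  have h := (isWordClass_paddedList hsupport ((hcard _).trans (by omega : 4 ≤ r + 1))).cons i
  rw [support_add_eq_union, support_ε, ← Finset.insert_eq]
  exact h.eq_paddedList.symm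

lemma wordDefect_cyclic (i j k : Fin 4) {g : Fin 4 →₀ ℕ} (hg : g.degree ≠ 0) :
    wordDefect r j k (ε i + g) + wordDefect r i k (ε j + g) + wordDefect r i j (ε k + g) = 0 := by
  have expand (a b i : Fin 4) : wordDefect r a b (ε i + g) =
      clsMulSq (X a * X b) (X i * (mon g + word (paddedList (r + 1) g.support) ^ 2)) := by
    rw [wordDefect, mul_add, mon_add]
    exact clsMulSq_mul_congr (isHomogeneous_X kk a) (isHomogeneous_X kk b)
      (by rw [map_add, map_add, cls_word_paddedList_ε_add hr i hg, mon_ε])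
  rw [expand, expand, expand, add_comm, ← add_assoc, add_right_comm]
  exact clsMulSq_cyclic (isHomogeneous_X kk i) (isHomogeneous_X kk j) (isHomogeneous_X kk k) _

lemma wordDefect_ε_add_two (hab : a ≠ b) (i : Fin 4) {c : Fin 4 →₀ ℕ}
    (hc : c.degree + 1 = 2 ^ (r + 1)) : wordDefect r a b (ε i + 2 • c) = 0 := by
  rw [pow_succ] at hc
  obtain ⟨k, e, rfl⟩ | ⟨m, u, rfl⟩ :=
    eq_ε_add_or_eq_triple_add_of_odd (c := c) ⟨2 ^ r - 1, by have := Nat.two_pow_pos r; omega⟩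
  · simp only [map_add, map_nsmul, Finsupp.degree_single, smul_eq_mul] at hc
    exact wordDefect_ε_add_two_ε_add_four i k (by omega)
  · simp only [map_add, map_nsmul, degree_triple, smul_eq_mul] at hc
    have hu : u.degree + 2 = 2 ^ r := by omega
    obtain rfl | him := eq_or_ne i m
    swap
    · exact wordDefect_ε_add_two_triple_add_four_of_ne hu him
    obtain ⟨p, q, hnodup⟩ := exists_nodup_of_ne hab
    have hcyclic := wordDefect_cyclic hr p a b (g := 2 • (triple p + 2 • u))
      (by simp [map_add, map_nsmul, degree_triple])
    rw [wordDefect_ε_add_two_triple_add_four_of_ne hu (by grind : a ≠ p),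
      wordDefect_ε_add_two_triple_add_four_of_ne hu (by grind : b ≠ p), add_zero, add_zero]
      at hcyclic
    rw [wordDefect_ε_add_two_triple_comm i p, hcyclic]

lemma wordDefect_triple_of_nodup {i j k l : Fin 4} (h : [i, j, k, l].Nodup) {v : Fin 4 →₀ ℕ}
    (hv : v.degree + 2 = 2 ^ (r + 1)) : wordDefect r i j (triple l + 2 • v) = 0 := by
  have hcyclic := wordDefect_cyclic hr i j k (g := ε i + ε j + 2 • v) (by simp [map_add])
  have hki : k ≠ i := by grind
  have hjk : j ≠ k := by grind
  have hi : ε i + (ε i + ε j + 2 • v) = ε j + 2 • (ε i + v) := by module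
  have hj : ε j + (ε i + ε j + 2 • v) = ε i + 2 • (ε j + v) := by module
  have hk : ε k + (ε i + ε j + 2 • v) = triple l + 2 • v := by rw [triple_eq h]; abel
  have hdegree (i : Fin 4) : (ε i + v).degree + 1 = 2 ^ (r + 1) := by
    rw [map_add, Finsupp.degree_single]; omega
  rwa [hi, hj, hk, wordDefect_ε_add_two hr hjk _ (hdegree i),
    wordDefect_ε_add_two hr hki.symm _ (hdegree j), zero_add, zero_add] at hcyclic

lemma wordDefect_triple_congr {i k l : Fin 4} (hik : i ≠ k) (hil : i ≠ l) {v : Fin 4 →₀ ℕ}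
    (hv : v.degree + 2 = 2 ^ (r + 1)) :
    wordDefect r i l (triple l + 2 • v) = wordDefect r i k (triple k + 2 • v) := by
  obtain rfl | hkl := eq_or_ne k l
  · rfl
  obtain ⟨j, hnodup⟩ := exists_nodup_of_ne_of_ne hik hil hkl
  have hcyclic := wordDefect_cyclic hr k l i (g := ε i + ε j + 2 • v) (by simp [map_add])
  have hi : ε i + (ε i + ε j + 2 • v) = ε j + 2 • (ε i + v) := by module
  have hl : ε k + (ε i + ε j + 2 • v) = triple l + 2 • v := by
    rw [triple_eq (by grind : [k, i, j, l].Nodup)]; abel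
  have hk : ε l + (ε i + ε j + 2 • v) = triple k + 2 • v := by
    rw [triple_eq (by grind : [l, i, j, k].Nodup)]; abel
  rwa [hi, hl, hk, wordDefect_ε_add_two hr hkl _ (by rw [map_add, Finsupp.degree_single]; omega),
    add_zero, cohit_add_eq_zero, wordDefect_comm, wordDefect_comm r k] at hcyclic

lemma wordDefect_triple_add_four (hab : a ≠ b) (m : Fin 4) {v : Fin 4 →₀ ℕ}
    (hv : v.degree + 1 = 2 ^ r) : wordDefect r a b (triple m + 2 • 2 • v) = 0 := by
  have h8 : 2 ^ 3 ≤ 2 ^ r := Nat.pow_le_pow_right two_pos hr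
  obtain ⟨i, u, rfl⟩ := exists_eq_ε_add (c := v) (by omega)
  obtain ⟨p, hpm⟩ := exists_ne m
  obtain ⟨j, k, hnodup⟩ := exists_nodup_of_ne hpm
  rw [map_add, Finsupp.degree_single] at hv
  rw [triple_eq (by grind : [p, j, k, m].Nodup)]
  have vanish (x y z : Fin 4) : wordDefect r a b (ε x + 2 • (ε y + ε z + ε i + 2 • u)) = 0 :=
    wordDefect_ε_add_two hr hab x
      (by simp only [map_add, map_nsmul, Finsupp.degree_single, smul_eq_mul, pow_succ]; omega)
  have hcls := clsMulSq_Sq_one (isHomogeneous_X kk p) (isHomogeneous_X kk j) (isHomogeneous_X kk k)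
    (X i * mon u ^ 2)
  rw [Sq_one_mul (isHomogeneous_X kk i), Sq_one_sq, mul_zero, zero_add] at hcls
  rw [wordDefect_eq_add_add (c₁ := ε p + 2 • (ε j + ε k + ε i + 2 • u))
    (c₂ := ε j + 2 • (ε p + ε k + ε i + 2 • u)) (c₃ := ε k + 2 • (ε p + ε j + ε i + 2 • u)),
    vanish, vanish, vanish, add_zero, add_zero]
  · simp only [mon_add, mon_two_smul, mon_ε, mul_assoc, mul_pow, clsMulSq_apply] at hcls ⊢
    exact hcls
  all_goals
    ext x
    simp only [support_add_eq_union, support_two_smul, support_ε, Finset.mem_union,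
      Finset.mem_singleton]
    tauto

end

end WordDefect

section TripleDefect

/-- The common value of the word defects of `x_c x_l` at `x_i x_j x_c (x^v)²`, where `i`, `j`, `l`
are the indices other than `c`; it does not depend on `l` (`wordDefect_eq_tripleDefect`), and the
definition takes `l = c + 1`. -/
def tripleDefect (r : ℕ) (c : Fin 4) (v : Fin 4 →₀ ℕ) : Cohit (Fin 4) :=
  wordDefect r c (c + 1) (triple (c + 1) + 2 • v)

/-- The sum of the word defects of `x_a x_b` at `x_c x_d x^w` over the six ways of splitting
`{a, b, c, d}` into two ordered pairs. -/
def pairSplitDefect (r : ℕ) (a b c d : Fin 4) (w : Fin 4 →₀ ℕ) : Cohit (Fin 4) :=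
  wordDefect r a b (ε c + ε d + w) + wordDefect r a c (ε b + ε d + w)
    + wordDefect r a d (ε b + ε c + w) + wordDefect r b c (ε a + ε d + w)
    + wordDefect r b d (ε a + ε c + w) + wordDefect r c d (ε a + ε b + w)

variable {r : ℕ}

lemma pairSplitDefect_swap (a b c d : Fin 4) (w : Fin 4 →₀ ℕ) :
    pairSplitDefect r a b c d w = pairSplitDefect r b a c d w := by
  rw [pairSplitDefect, pairSplitDefect, wordDefect_comm r a b, add_comm (ε a) (ε b)]
  abel

lemma pairSplitDefect_add {w w' : Fin 4 →₀ ℕ} (h : w.support = w'.support) (a b c d : Fin 4) :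
    pairSplitDefect r a b c d w + pairSplitDefect r a b c d w' =
      pairSplitSum (X a) (X b) (X c) (X d) (mon w + mon w') := by
  have split (i j k l : Fin 4) : clsMulSq (X i * X j) (X k * X l * (mon w + mon w')) =
      wordDefect r i j (ε k + ε l + w) + wordDefect r i j (ε k + ε l + w') := by
    rw [wordDefect_add (by rw [support_add_eq_union, h, ← support_add_eq_union])]
    simp only [mon_add, mul_add, mon_ε]
  rw [pairSplitSum_apply, split, split, split, split, split, split, pairSplitDefect,
    pairSplitDefect]
  abel

variable (hr : 3 ≤ r)
include hr

lemma wordDefect_eq_tripleDefect {c l : Fin 4} (h : c ≠ l) {v : Fin 4 →₀ ℕ}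
    (hv : v.degree + 2 = 2 ^ (r + 1)) :
    wordDefect r c l (triple l + 2 • v) = tripleDefect r c v :=
  wordDefect_triple_congr hr (by simp) h hv

-- The three defects of a pair containing `x` are equal to `tripleDefect r x v`, and the three
-- others vanish.
lemma pairSplitDefect_eq_tripleDefect {x j k l : Fin 4} (h : [x, j, k, l].Nodup) {v : Fin 4 →₀ ℕ}
    (hv : v.degree + 2 = 2 ^ (r + 1)) :
    pairSplitDefect r x j k l (ε x + 2 • v) = tripleDefect r x v := by
  have eq_triple {p q s : Fin 4} (h : [p, q, x, s].Nodup) :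
      wordDefect r x s (ε p + ε q + (ε x + 2 • v)) = tripleDefect r x v := by
    rw [← add_assoc, ← triple_eq h, wordDefect_eq_tripleDefect hr (by grind) hv]
  have vanish {a b : Fin 4} (p : Fin 4) (hab : a ≠ b) :
      wordDefect r a b (ε x + ε p + (ε x + 2 • v)) = 0 := by
    rw [show ε x + ε p + (ε x + 2 • v) = ε p + 2 • (ε x + v) by module]
    exact wordDefect_ε_add_two hr hab p (by rw [map_add, Finsupp.degree_single]; omega)
  rw [pairSplitDefect, eq_triple (s := j) (by grind), eq_triple (s := k) (by grind),
    eq_triple (s := l) (by grind), vanish l (by grind), vanish k (by grind), vanish j (by grind),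
    ZModModule.add_self, zero_add, add_zero, add_zero, add_zero]

lemma tripleDefect_eq_of_mon_add_mon {c d : Fin 4} (hcd : c ≠ d) {v v' : Fin 4 →₀ ℕ}
    (hv : v.degree + 2 = 2 ^ (r + 1)) (hv' : v'.degree + 2 = 2 ^ (r + 1))
    (hsupport : (ε c + 2 • v).support = (ε d + 2 • v').support) {h₁ h₂ : P4}
    (hSq : Sq 1 h₁ = Sq 2 h₂) (hmon : mon (ε c + 2 • v) + mon (ε d + 2 • v') = h₁ + Sq 1 h₂) :
    tripleDefect r c v = tripleDefect r d v' := by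
  obtain ⟨k, l, h⟩ := exists_nodup_of_ne hcd
  rw [← cohit_add_eq_zero, ← pairSplitDefect_eq_tripleDefect hr h hv,
    ← pairSplitDefect_eq_tripleDefect hr (by grind : [d, c, k, l].Nodup) hv',
    pairSplitDefect_swap d, pairSplitDefect_add hsupport, hmon]
  exact pairSplitSum_add_Sq_one (isHomogeneous_X kk c) (isHomogeneous_X kk d) (isHomogeneous_X kk k)
    (isHomogeneous_X kk l) hSq

lemma tripleDefect_ε_add (c d : Fin 4) {y : Fin 4 →₀ ℕ} (hy : y.degree + 3 = 2 ^ (r + 1)) :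
    tripleDefect r c (ε d + y) = tripleDefect r d (ε c + y) := by
  obtain rfl | hcd := eq_or_ne c d
  · rfl
  refine tripleDefect_eq_of_mon_add_mon hr hcd ?_ ?_ ?_ (h₂ := 0) ?_
    (by rw [map_zero, add_zero])
  · rw [map_add, Finsupp.degree_single]; omega
  · rw [map_add, Finsupp.degree_single]; omega
  · simp only [support_add_eq_union, support_two_smul, support_ε, Finset.union_left_comm]
  · simp only [mon_add, mon_ε, mon_two_smul, map_add, map_zero, Sq_one_mul, isHomogeneous_X,
      Sq_one_sq]
    linear_combination (X c * X d * mon y) ^ 2 * CharTwo.two_eq_zero (R := P4)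

lemma tripleDefect_two_ε_add (c d : Fin 4) {y : Fin 4 →₀ ℕ} (hy : y.degree + 4 = 2 ^ (r + 1)) :
    tripleDefect r c (2 • ε d + y) = tripleDefect r d (2 • ε c + y) := by
  obtain rfl | hcd := eq_or_ne c d
  · rfl
  have hz := Sq_one_Sq_one (mon y)
  set z := Sq 1 (mon y) with hzy
  refine tripleDefect_eq_of_mon_add_mon hr hcd ?_ ?_ ?_
    (h₁ := X c * (X d ^ 2 * mon y) ^ 2 + X d * (X c ^ 2 * mon y) ^ 2
      + (X d * (X c * z) ^ 2 + X c * (X d * z) ^ 2))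
    (h₂ := (X c * X d * mon y) ^ 2 + X c * (X d * z ^ 2)) ?_ ?_
  · simp only [map_add, map_nsmul, Finsupp.degree_single, smul_eq_mul]; omega
  · simp only [map_add, map_nsmul, Finsupp.degree_single, smul_eq_mul]; omega
  · simp only [support_add_eq_union, support_two_smul, support_ε, Finset.union_left_comm]
  · simp only [map_add, mul_assoc, Sq_one_mul, Sq_two_mul, isHomogeneous_X, Sq_one_sq, Sq_two_sq,
      ← hzy, hz]
    linear_combination -(X c ^ 2 * X d ^ 3 * z * mon y + X c ^ 3 * X d ^ 2 * z * mon y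
      + X c ^ 3 * X d ^ 3 * mon y ^ 2) * CharTwo.two_eq_zero (R := P4)
  · simp only [mon_add, mon_ε, mon_two_smul, map_add, Sq_one_mul, isHomogeneous_X, Sq_one_sq]
    linear_combination
      -(X d * (X c * z) ^ 2 + X c * (X d * z) ^ 2) * CharTwo.two_eq_zero (R := P4)

/-- All triple defects at pairs `(c, v)` with `ε c + v = z` vanish. -/
def TripleDefectVanishes (r : ℕ) (z : Fin 4 →₀ ℕ) : Prop :=
  ∀ c v, z = ε c + v → tripleDefect r c v = 0

lemma tripleDefectVanishes_of_eq_zero {c : Fin 4} {v : Fin 4 →₀ ℕ}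
    (hv : v.degree + 2 = 2 ^ (r + 1)) (h : tripleDefect r c v = 0) :
    TripleDefectVanishes r (ε c + v) := by
  intro d v' hv'
  obtain rfl | hcd := eq_or_ne c d
  · rwa [← add_left_cancel hv']
  obtain ⟨y, rfl⟩ : ∃ y, v = ε d + y := by
    refine exists_eq_ε_add_of_ne_zero fun hd => ?_
    have := DFunLike.congr_fun hv' d
    simp only [Finsupp.add_apply, Finsupp.single_eq_same, Finsupp.single_eq_of_ne hcd.symm, hd]
      at this
    omega
  obtain rfl : v' = ε c + y := add_left_cancel (a := ε d) (by rw [← hv']; abel)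
  rw [map_add, Finsupp.degree_single] at hv
  rw [← tripleDefect_ε_add hr c d (by omega), h]

lemma TripleDefectVanishes.move {c d : Fin 4} {y : Fin 4 →₀ ℕ} (hy : y.degree + 4 = 2 ^ (r + 1))
    (h : TripleDefectVanishes r (ε d + (2 • ε c + y))) :
    TripleDefectVanishes r (ε c + (2 • ε d + y)) := by
  refine tripleDefectVanishes_of_eq_zero hr ?_ ?_
  · simp only [map_add, map_nsmul, Finsupp.degree_single, smul_eq_mul]; omega
  · rw [tripleDefect_two_ε_add hr c d hy]; exact h _ _ rfl

lemma tripleDefectVanishes_ε_add_two (k : Fin 4) {e : Fin 4 →₀ ℕ}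
    (he : e.degree + 1 = 2 ^ r) : TripleDefectVanishes r (ε k + 2 • e) := by
  refine tripleDefectVanishes_of_eq_zero hr ?_ (wordDefect_triple_add_four hr (by simp) _ he)
  rw [map_nsmul, smul_eq_mul, pow_succ]
  omega

lemma tripleDefectVanishes_triple_add_two_ε_add {i m : Fin 4} (him : i ≠ m) {u : Fin 4 →₀ ℕ}
    (hu : u.degree + 3 = 2 ^ r) : TripleDefectVanishes r (triple m + 2 • (ε i + u)) := by
  obtain ⟨j, k, hnodup⟩ := exists_nodup_of_ne him
  have hvanish := tripleDefectVanishes_ε_add_two hr k (e := ε i + ε j + u)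
    (by simp only [map_add, Finsupp.degree_single]; omega)
  rw [show ε k + 2 • (ε i + ε j + u) = ε i + (2 • ε j + (ε i + ε k + 2 • u)) by module] at hvanish
  have hmove := hvanish.move hr (by
    simp only [map_add, map_nsmul, Finsupp.degree_single, smul_eq_mul, pow_succ]; omega)
  rw [triple_eq (by grind : [i, j, k, m].Nodup)]
  convert hmove using 1
  module

lemma tripleDefectVanishes_triple_add_four_ε_add (m : Fin 4) {u : Fin 4 →₀ ℕ}
    (hu : u.degree + 4 = 2 ^ r) :
    TripleDefectVanishes r (triple m + 2 • (ε m + (ε m + u))) := by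
  obtain ⟨i, him⟩ := exists_ne m
  obtain ⟨j, k, hnodup⟩ := exists_nodup_of_ne him
  have hvanish := tripleDefectVanishes_triple_add_two_ε_add hr him.symm (u := ε i + u)
    (by simp only [map_add, Finsupp.degree_single]; omega)
  rw [triple_eq (by grind : [m, j, k, i].Nodup), show ε m + ε j + ε k + 2 • (ε m + (ε i + u)) =
    ε m + (2 • ε i + (ε j + ε k + 2 • (ε m + u))) by module] at hvanish
  have hmove := hvanish.move hr (by
    simp only [map_add, map_nsmul, Finsupp.degree_single, smul_eq_mul, pow_succ]; omega)
  rw [triple_eq (by grind : [i, j, k, m].Nodup)]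
  convert hmove using 1
  module

theorem tripleDefectVanishes_of_degree {z : Fin 4 →₀ ℕ} (hz : z.degree + 1 = 2 ^ (r + 1)) :
    TripleDefectVanishes r z := by
  have h8 : 2 ^ 3 ≤ 2 ^ r := Nat.pow_le_pow_right two_pos hr
  rw [pow_succ] at hz
  obtain ⟨k, e, rfl⟩ | ⟨m, u, rfl⟩ :=
    eq_ε_add_or_eq_triple_add_of_odd (c := z) ⟨2 ^ r - 1, by omega⟩
  · simp only [map_add, map_nsmul, Finsupp.degree_single, smul_eq_mul] at hz
    exact tripleDefectVanishes_ε_add_two hr k (by omega)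
  simp only [map_add, map_nsmul, degree_triple, smul_eq_mul] at hz
  obtain ⟨i, u, rfl⟩ := exists_eq_ε_add (c := u) (by omega)
  rw [map_add, Finsupp.degree_single] at hz
  obtain rfl | him := eq_or_ne i m
  swap
  · exact tripleDefectVanishes_triple_add_two_ε_add hr him (by omega)
  obtain ⟨j, u, rfl⟩ := exists_eq_ε_add (c := u) (by omega)
  rw [map_add, Finsupp.degree_single] at hz
  obtain rfl | hji := eq_or_ne j i
  · exact tripleDefectVanishes_triple_add_four_ε_add hr j (by omega)
  · rw [add_left_comm]
    exact tripleDefectVanishes_triple_add_two_ε_add hr hji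
      (by rw [map_add, Finsupp.degree_single]; omega)

theorem wordDefect_eq_zero {a b : Fin 4} (hab : a ≠ b) {c : Fin 4 →₀ ℕ}
    (hc : c.degree + 1 = 2 ^ (r + 2)) : wordDefect r a b c = 0 := by
  rw [pow_succ] at hc
  obtain ⟨k, e, rfl⟩ | ⟨l, v, rfl⟩ :=
    eq_ε_add_or_eq_triple_add_of_odd (c := c)
      ⟨2 ^ (r + 1) - 1, by have := Nat.two_pow_pos (r + 1); omega⟩
  · simp only [map_add, map_nsmul, Finsupp.degree_single, smul_eq_mul] at hc
    exact wordDefect_ε_add_two hr hab k (by omega)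
  simp only [map_add, map_nsmul, degree_triple, smul_eq_mul] at hc
  have of_eq_right {a : Fin 4} (hal : a ≠ l) : wordDefect r a l (triple l + 2 • v) = 0 := by
    rw [wordDefect_eq_tripleDefect hr hal (by omega)]
    refine tripleDefectVanishes_of_degree hr ?_ _ _ rfl
    rw [map_add, Finsupp.degree_single]
    omega
  obtain rfl | hbl := eq_or_ne b l
  · exact of_eq_right hab
  obtain rfl | hal := eq_or_ne a l
  · rw [wordDefect_comm]
    exact of_eq_right hbl
  obtain ⟨k, hnodup⟩ := exists_nodup_of_ne_of_ne hab hal hbl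
  exact wordDefect_triple_of_nodup hr (by grind : [a, b, k, l].Nodup) (by omega)

theorem clsMulSq_mon_eq_word (a b : Fin 4) {c : Fin 4 →₀ ℕ} (hc : c.degree + 1 = 2 ^ (r + 2)) :
    clsMulSq (X a * X b) (mon c) =
      clsMulSq (X a * X b) (word (paddedList (r + 2) c.support)) := by
  obtain rfl | hab := eq_or_ne a b
  · simp only [clsMulSq_apply, ← pow_two,
      cls_eq_zero.2 (sq_mul_sq_mem_hits (isHomogeneous_X kk a) _)]
  · rw [← cohit_add_eq_zero, ← map_add]
    exact wordDefect_eq_zero hr hab hc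

end TripleDefect

section Evaluation

lemma eval_indicator_mon {σ : Type*} [DecidableEq σ] (T : Finset σ) (c : σ →₀ ℕ) :
    eval ((T : Set σ).indicator 1) (mon c) = if c.support ⊆ T then (1 : kk) else 0 := by
  rw [mon, eval_monomial, one_mul, Finsupp.prod]
  split_ifs with h
  · exact Finset.prod_eq_one fun i hi => by simp [h hi]
  · obtain ⟨i, hi, hiT⟩ := Finset.not_subset.1 h
    exact Finset.prod_eq_zero hi (by simp [hiT, Finsupp.mem_support_iff.1 hi])

lemma sum_powerset_ite_subset {σ : Type*} [DecidableEq σ] (S U : Finset σ) :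
    ∑ T ∈ S.powerset, (if U ⊆ T then (1 : kk) else 0) = if U = S then 1 else 0 := by
  rw [Finset.sum_boole, ← Finset.Icc_eq_filter_powerset]
  split_ifs with h
  · rw [h, Finset.Icc_self, Finset.card_singleton, Nat.cast_one]
  by_cases hU : U ⊆ S
  · have hcard : S.card - U.card ≠ 0 :=
      Nat.sub_ne_zero_of_lt (Finset.card_lt_card (hU.ssubset_of_ne h))
    rw [Finset.card_Icc_finset hU, Nat.cast_pow, Nat.cast_two, CharTwo.two_eq_zero (R := kk),
      zero_pow hcard]
  · rw [Finset.Icc_eq_empty hU, Finset.card_empty, Nat.cast_zero]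

lemma map_linForm_mul_linForm {σ M : Type*} [Fintype σ] [AddCommGroup M] [Module kk M]
    (L : MvPolynomial σ kk →ₗ[kk] M) (α β : σ → kk) :
    L (linForm α * linForm β) = ∑ i, ∑ j, (α i * β j) • L (X i * X j) := by
  simp only [linForm_apply, Finset.sum_mul_sum, smul_mul_smul_comm, map_sum, map_smul]

-- Möbius inversion over the subsets `T` of `S` extracts from the values of `g` the sum of the
-- coefficients of the monomials of `g` with support `S`.
lemma clsMulSq_eq_sum_eval {r : ℕ} (hr : 3 ≤ r) (a b : Fin 4) {g : P4}
    (hg : g.IsHomogeneous (2 ^ (r + 2) - 1)) :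
    clsMulSq (X a * X b) g =
      ∑ S : Finset (Fin 4), (∑ T ∈ S.powerset, eval ((T : Set (Fin 4)).indicator 1) g) •
        clsMulSq (X a * X b) (word (paddedList (r + 2) S)) := by
  rw [← mem_homogeneousSubmodule, homogeneousSubmodule_eq_span_mon] at hg
  induction hg using Submodule.span_induction with
  | mem _ h =>
    obtain ⟨c, hc, rfl⟩ := h
    have hdegree : c.degree + 1 = 2 ^ (r + 2) := by
      rw [show c.degree = 2 ^ (r + 2) - 1 from hc, Nat.sub_add_cancel Nat.one_le_two_pow]
    simp only [eval_indicator_mon, sum_powerset_ite_subset, ite_smul, one_smul, zero_smul,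
      Finset.sum_ite_eq, Finset.mem_univ, if_true, clsMulSq_mon_eq_word hr a b hdegree]
  | zero => simp only [map_zero, Finset.sum_const_zero, zero_smul]
  | add f g _ _ hf hg => simp only [map_add, hf, hg, Finset.sum_add_distrib, add_smul]
  | smul c g _ hg =>
    simp only [map_smul, hg, Finset.smul_sum, smul_eval, ← Finset.mul_sum, mul_smul]

theorem clsMulSq_eq_zero_of_eval_eq_zero {r : ℕ} (hr : 3 ≤ r) (α β : Fin 4 → kk) {g : P4}
    (hg : g.IsHomogeneous (2 ^ (r + 2) - 1)) (heval : ∀ u, eval u g = 0) :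
    clsMulSq (linForm α * linForm β) g = 0 := by
  simp only [map_linForm_mul_linForm, LinearMap.sum_apply, LinearMap.smul_apply,
    clsMulSq_eq_sum_eval hr _ _ hg, heval, Finset.sum_const_zero, zero_smul, smul_zero]

end Evaluation

section PerpVec

variable {σ : Type*} [Nonempty σ]

/-- An index at which the nonzero vector `v` has entry `1` (an arbitrary index if `v = 0`). -/
def pivot (v : σ → kk) : σ := Classical.epsilon fun i => v i = 1

lemma apply_pivot {v : σ → kk} (hv : v ≠ 0) : v (pivot v) = 1 := by
  obtain ⟨i, hi⟩ := Function.ne_iff.1 hv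
  exact Classical.epsilon_spec (p := fun i => v i = 1) ⟨i, Fin.eq_one_of_ne_zero _ hi⟩

variable [DecidableEq σ]

/-- The basis vector `e_k`, made orthogonal to `v` by adding a multiple of `e_{pivot v}`. -/
def perpVec (v : σ → kk) (k : σ) : σ → kk := Pi.single k 1 + Pi.single (pivot v) (v k)

lemma perpVec_pivot {v : σ → kk} (hv : v ≠ 0) : perpVec v (pivot v) = 0 := by
  rw [perpVec, apply_pivot hv]
  exact ZModModule.add_self _

variable [Fintype σ]

lemma perpVec_dotProduct (v u : σ → kk) (k : σ) :
    perpVec v k ⬝ᵥ u = u k + v k * u (pivot v) := by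
  rw [perpVec, add_dotProduct, single_dotProduct, single_dotProduct, one_mul]

lemma perpVec_dotProduct_self {v : σ → kk} (hv : v ≠ 0) (k : σ) : perpVec v k ⬝ᵥ v = 0 := by
  rw [perpVec_dotProduct, apply_pivot hv, mul_one, CharTwo.add_self_eq_zero]

lemma X_eq_linForm_perpVec_add (v : σ → kk) (k : σ) :
    X k = linForm (perpVec v k) + v k • X (pivot v) := by
  rw [perpVec, map_add, linForm_single, ← mul_one (v k), ← smul_eq_mul, Pi.single_smul', map_smul,
    linForm_single, add_assoc, smul_eq_mul, mul_one, ZModModule.add_self, add_zero]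

end PerpVec

section DiracPolynomials

variable {σ : Type*} [Nonempty σ] [DecidableEq σ] [Fintype σ]

/-- A form of degree `d ≥ #σ` which, as a function on `σ → F₂`, is the indicator of the
nonzero vector `v`. -/
def diracPoly (v : σ → kk) (d : ℕ) : MvPolynomial σ kk :=
  X (pivot v) ^ (d - Fintype.card σ) * ∏ k, (linForm (perpVec v k) + X (pivot v))

lemma isHomogeneous_diracPoly (v : σ → kk) {d : ℕ} (hd : Fintype.card σ ≤ d) :
    (diracPoly v d).IsHomogeneous d := by
  have h := ((isHomogeneous_X kk (pivot v)).pow (d - Fintype.card σ)).mul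
    (IsHomogeneous.prod Finset.univ _ (fun _ => 1) fun k _ =>
      (isHomogeneous_linForm (perpVec v k)).add (isHomogeneous_X kk (pivot v)))
  simpa [diracPoly, hd] using h

lemma diracPoly_succ (v : σ → kk) {d : ℕ} (hd : Fintype.card σ ≤ d) :
    diracPoly v (d + 1) = X (pivot v) * diracPoly v d := by
  rw [diracPoly, diracPoly, Nat.sub_add_comm hd, pow_succ', mul_assoc]

lemma eval_diracPoly {v : σ → kk} (hv : v ≠ 0) (d : ℕ) (u : σ → kk) :
    eval u (diracPoly v d) = if u = v then 1 else 0 := by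
  simp only [diracPoly, map_mul, map_pow, eval_X, map_prod, map_add, eval_linForm,
    perpVec_dotProduct]
  split_ifs with h
  · subst h
    simp only [apply_pivot hv, mul_one, CharTwo.add_self_eq_zero, zero_add, one_pow,
      Finset.prod_const_one]
  · obtain hu | hu : u (pivot v) = 0 ∨ u (pivot v) = 1 := (by decide : ∀ x : kk, x = 0 ∨ x = 1) _
    · rw [Finset.prod_eq_zero (Finset.mem_univ (pivot v)) (by simp [hu]), mul_zero]
    · obtain ⟨k, hk⟩ := Function.ne_iff.1 h
      have hfactor : ∀ x y : kk, x ≠ y → x + y * 1 + 1 = 0 := by decide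
      rw [Finset.prod_eq_zero (Finset.mem_univ k) (by rw [hu]; exact hfactor _ _ hk), mul_zero]

end DiracPolynomials

section DiracWords

lemma clsMulSq_mul_swap {σ : Type*} {a b c g : MvPolynomial σ kk} (ha : a.IsHomogeneous 1)
    (hb : b.IsHomogeneous 1) (hc : c.IsHomogeneous 1) (hg : a * g ∈ hits σ) :
    clsMulSq (a * b) (c * g) = clsMulSq (a * c) (b * g) := by
  have h := clsMulSq_cyclic ha hb hc g
  rwa [clsMulSq_mul_eq_zero_of_mem_hits hb hc hg, add_zero, cohit_add_eq_zero] at h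

/-- The degree of the polynomials `diracWord r v l` with `l` of length `s`. -/
def wordDegree (r : ℕ) : ℕ → ℕ
  | 0 => 2 ^ (r + 2) - 1
  | s + 1 => 2 * wordDegree r s + 2

/-- The iterated product `y z_{i₁} (y z_{i₂} (⋯ (y z_{iₛ} δ²)² ⋯)²)²`, where `y` is the variable of
index `pivot v`, `z_i` is the linear form of `perpVec v i`, and `δ` is the Dirac polynomial of `v`
of degree `2 ^ (r + 2) - 1`. -/
def diracWord (r : ℕ) (v : Fin 4 → kk) : List (Fin 4) → P4
  | [] => diracPoly v (2 ^ (r + 2) - 1)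
  | k :: l => X (pivot v) * linForm (perpVec v k) * diracWord r v l ^ 2

variable {r : ℕ} {v : Fin 4 → kk}

lemma five_le_two_pow_sub_one (hr : 1 ≤ r) : 5 ≤ 2 ^ (r + 2) - 1 := by
  have := Nat.pow_le_pow_right two_pos (show 3 ≤ r + 2 by omega)
  omega

lemma isHomogeneous_diracWord (hr : 1 ≤ r) (v : Fin 4 → kk) (l : List (Fin 4)) :
    (diracWord r v l).IsHomogeneous (wordDegree r l.length) := by
  induction l with
  | nil => exact isHomogeneous_diracPoly v (by have := five_le_two_pow_sub_one hr; simp; omega)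
  | cons k l ih =>
    convert ((isHomogeneous_X kk (pivot v)).mul (isHomogeneous_linForm (perpVec v k))).mul
      (ih.pow 2) using 1
    · rfl
    · rw [List.length_cons, wordDegree]
      ring

lemma diracWord_eq_zero_of_pivot_mem (hv : v ≠ 0) {l : List (Fin 4)} (h : pivot v ∈ l) :
    diracWord r v l = 0 := by
  induction l with
  | nil => exact absurd h List.not_mem_nil
  | cons k l ih =>
    rw [diracWord]
    rcases List.mem_cons.1 h with rfl | h
    · rw [perpVec_pivot hv, map_zero, mul_zero, zero_mul]
    · rw [ih h, zero_pow two_ne_zero, mul_zero]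

lemma clsMulSq_perp_mul_perp_diracPoly (hr : 3 ≤ r) (hv : v ≠ 0) (i j : Fin 4) :
    clsMulSq (linForm (perpVec v i) * linForm (perpVec v j))
      (diracPoly v (2 ^ (r + 2) - 1)) = 0 := by
  have h5 := five_le_two_pow_sub_one (r := r) (by omega)
  obtain ⟨d, hd⟩ : ∃ d, 2 ^ (r + 2) - 1 = d + 1 := ⟨_, (Nat.sub_add_cancel (by omega)).symm⟩
  have hcard : Fintype.card (Fin 4) ≤ d := by rw [Fintype.card_fin]; omega
  have vanish (i j : Fin 4) : clsMulSq (linForm (perpVec v i) * X (pivot v))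
      (linForm (perpVec v j) * diracPoly v d) = 0 := by
    rw [← linForm_single]
    refine clsMulSq_eq_zero_of_eval_eq_zero hr _ _ ?_ fun u => ?_
    · rw [hd, add_comm]
      exact (isHomogeneous_linForm _).mul (isHomogeneous_diracPoly v hcard)
    · rw [map_mul, eval_linForm, eval_diracPoly hv]
      split_ifs with h
      · rw [h, perpVec_dotProduct_self hv, zero_mul]
      · rw [mul_zero]
  have h := clsMulSq_cyclic (isHomogeneous_linForm (perpVec v i))
    (isHomogeneous_linForm (perpVec v j)) (isHomogeneous_X kk (pivot v)) (diracPoly v d)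
  rwa [vanish, vanish, add_zero, add_zero, ← diracPoly_succ v hcard, ← hd] at h

lemma clsMulSq_perp_mul_perp_diracWord (hr : 3 ≤ r) (hv : v ≠ 0) (i j : Fin 4)
    (l : List (Fin 4)) :
    clsMulSq (linForm (perpVec v i) * linForm (perpVec v j)) (diracWord r v l) = 0 := by
  induction l generalizing i j with
  | nil => exact clsMulSq_perp_mul_perp_diracPoly hr hv i j
  | cons k l ih =>
    have vanish (i j : Fin 4) : clsMulSq (linForm (perpVec v i) * X (pivot v))
        (linForm (perpVec v j) * (linForm (perpVec v k) * diracWord r v l ^ 2)) = 0 := by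
      rw [← mul_assoc]
      exact clsMulSq_mul_eq_zero_of_mem_hits (isHomogeneous_linForm _) (isHomogeneous_X kk _)
        (cls_eq_zero.1 (ih j k))
    have h := clsMulSq_cyclic (isHomogeneous_linForm (perpVec v i))
      (isHomogeneous_linForm (perpVec v j)) (isHomogeneous_X kk (pivot v))
      (linForm (perpVec v k) * diracWord r v l ^ 2)
    rwa [vanish, vanish, add_zero, add_zero, ← mul_assoc] at h

theorem cls_diracWord_congr {l l' : List (Fin 4)}
    (hlength : l.length = l'.length) (htoFinset : l.toFinset = l'.toFinset) :
    cls (diracWord r v l) = cls (diracWord r v l') := by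
  have hy := isHomogeneous_X kk (pivot v)
  have hz (i : Fin 4) := isHomogeneous_linForm (perpVec v i)
  refine apply_eq_of_length_eq_of_toFinset_eq (F := fun l => cls (diracWord r v l))
    (fun i l l' h => ?_) (fun i j l => ?_) (fun i j l => ?_) hlength htoFinset
  · exact clsMulSq_mul_congr hy (hz i) h
  · convert clsMulSq_mul_swap (g := X (pivot v) * diracWord r v l ^ 2) hy (hz i) (hz j) ?_ using 1
    · rw [clsMulSq_apply, diracWord, diracWord]
      ring_nf
    · rw [clsMulSq_apply, diracWord, diracWord]
      ring_nf
    · rw [← mul_assoc, ← pow_two]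
      exact sq_mul_sq_mem_hits hy _
  · convert clsMulSq_mul_swap (g := X (pivot v) ^ 3 * linForm (perpVec v i) *
      linForm (perpVec v j) * diracWord r v l ^ 4) hy (hz i) (hz j) ?_ using 1
    · simp only [clsMulSq_apply, diracWord]
      ring_nf
    · simp only [clsMulSq_apply, diracWord]
      ring_nf
    · convert cls_eq_zero.1 (clsMulSq_mul_eq_zero_of_mem_hits (hz i) (hz j)
        (sq_mul_sq_mem_hits hy (diracWord r v l))) using 1
      rw [mulSq_apply]
      ring

end DiracWords

section DiracSpan

/-- The span of the polynomials `diracWord r v l` with `v` nonzero and `l` of length `s`. -/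
def diracSpan (r s : ℕ) : Submodule kk P4 :=
  Submodule.span kk {f | ∃ v l, v ≠ 0 ∧ l.length = s ∧ f = diracWord r v l}

variable {r s : ℕ}

lemma diracSpan_le_iff {N : Submodule kk P4} :
    diracSpan r s ≤ N ↔ ∀ v l, v ≠ 0 → l.length = s → diracWord r v l ∈ N := by
  refine Submodule.span_le.trans ⟨fun h v l hv hl => h ⟨v, l, hv, hl, rfl⟩, ?_⟩
  rintro h _ ⟨v, l, hv, hl, rfl⟩
  exact h v l hv hl

lemma diracWord_mem_diracSpan {v : Fin 4 → kk} (hv : v ≠ 0) {l : List (Fin 4)}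
    (hl : l.length = s) : diracWord r v l ∈ diracSpan r s :=
  diracSpan_le_iff.1 le_rfl v l hv hl

lemma diracSpan_le_homogeneousSubmodule (hr : 1 ≤ r) (s : ℕ) :
    diracSpan r s ≤ homogeneousSubmodule (Fin 4) kk (wordDegree r s) :=
  diracSpan_le_iff.2 fun v l _ hl => hl ▸ isHomogeneous_diracWord hr v l

lemma clsMulSq_X_mul_X_diracWord (hr : 3 ≤ r) {v : Fin 4 → kk} (hv : v ≠ 0) (i j : Fin 4)
    (l : List (Fin 4)) :
    clsMulSq (X i * X j) (diracWord r v l) =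
      v j • cls (diracWord r v (i :: l)) + v i • cls (diracWord r v (j :: l)) := by
  have hzz := clsMulSq_perp_mul_perp_diracWord hr hv i j l
  have hyy : clsMulSq (X (pivot v) ^ 2) (diracWord r v l) = 0 :=
    cls_eq_zero.2 (sq_mul_sq_mem_hits (isHomogeneous_X kk _) _)
  rw [X_eq_linForm_perpVec_add v i, X_eq_linForm_perpVec_add v j,
    show (linForm (perpVec v i) + v i • X (pivot v)) * (linForm (perpVec v j) + v j • X (pivot v)) =
      linForm (perpVec v i) * linForm (perpVec v j) + v j • (X (pivot v) * linForm (perpVec v i))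
        + v i • (X (pivot v) * linForm (perpVec v j)) + (v i * v j) • X (pivot v) ^ 2 by
      simp only [smul_eq_C_mul, C_mul]; ring]
  simp only [map_add, map_smul, LinearMap.add_apply, LinearMap.smul_apply, hzz, hyy, zero_add,
    smul_zero, add_zero]
  rfl

lemma clsMulSq_X_mul_X_mem_of_cls_mem (hr : 3 ≤ r) (i j : Fin 4) {f : P4}
    (hf : cls f ∈ (diracSpan r s).map cls) :
    clsMulSq (X i * X j) f ∈ (diracSpan r (s + 1)).map cls := by
  obtain ⟨g, hg, hgf⟩ := hf
  rw [← clsMulSq_mul_congr (isHomogeneous_X kk i) (isHomogeneous_X kk j) hgf]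
  refine (diracSpan_le_iff (N := ((diracSpan r (s + 1)).map cls).comap
    (clsMulSq (X i * X j)))).2 (fun v l hv hl => ?_) hg
  have mem (k : Fin 4) : cls (diracWord r v (k :: l)) ∈ (diracSpan r (s + 1)).map cls :=
    Submodule.mem_map_of_mem (diracWord_mem_diracSpan hv (by rw [List.length_cons, hl]))
  rw [Submodule.mem_comap, clsMulSq_X_mul_X_diracWord hr hv]
  exact add_mem (Submodule.smul_mem _ _ (mem i)) (Submodule.smul_mem _ _ (mem j))

-- A form of degree `2 ^ (r + 2) - 1` agrees as a function with a combination of Dirac polynomials.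
lemma clsMulSq_X_mul_X_mem_zero (hr : 3 ≤ r) (i j : Fin 4) {g : P4}
    (hg : g.IsHomogeneous (2 ^ (r + 2) - 1)) :
    clsMulSq (X i * X j) g ∈ (diracSpan r 1).map cls := by
  have h5 := five_le_two_pow_sub_one (r := r) (by omega)
  let g' : P4 := ∑ v ∈ {0}ᶜ, eval v g • diracPoly v (2 ^ (r + 2) - 1)
  have hg' : g' ∈ diracSpan r 0 := Submodule.sum_mem _ fun v hv => Submodule.smul_mem _ _
    (diracWord_mem_diracSpan (l := []) (by simpa using hv) rfl)
  have hhom : (g - g').IsHomogeneous (2 ^ (r + 2) - 1) :=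
    hg.sub (diracSpan_le_homogeneousSubmodule (by omega) 0 hg')
  have eval_zero_g : eval 0 g = 0 := by
    rw [eval_zero, constantCoeff_eq]
    exact hg.coeff_eq_zero (by rw [map_zero]; omega)
  have heval (u : Fin 4 → kk) : eval u (g - g') = 0 := by
    have h : eval u g' = ∑ v ∈ {0}ᶜ, if u = v then eval v g else 0 := by
      rw [map_sum]
      refine Finset.sum_congr rfl fun v hv => ?_
      rw [smul_eval, eval_diracPoly (by simpa using hv), mul_ite, mul_one, mul_zero]
    rw [map_sub, h, Finset.sum_ite_eq]
    split_ifs with hu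
    · rw [sub_self]
    · rw [show u = 0 by simpa using hu, eval_zero_g, sub_zero]
  have h := clsMulSq_eq_zero_of_eval_eq_zero hr (Pi.single i 1) (Pi.single j 1) hhom heval
  rw [linForm_single, linForm_single, map_sub, sub_eq_zero] at h
  rw [h]
  exact clsMulSq_X_mul_X_mem_of_cls_mem hr i j (Submodule.mem_map_of_mem hg')

lemma clsMulSq_mul_mon_univ {i j k l : Fin 4} (h : [i, j, k, l].Nodup) (e : Fin 4 →₀ ℕ) :
    clsMulSq (X i * X j) (mon (∑ x, ε x + 2 • e)) =
      clsMulSq (X i * X k) (X i * X l * mon (ε j + e) ^ 2)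
        + clsMulSq (X j * X k) (X j * X l * mon (ε i + e) ^ 2) := by
  have huniv : ∑ x, ε x = ε i + ε j + ε k + ε l := by
    rw [← triple_eq h, triple, ← Finset.sum_compl_add_sum {l}, Finset.sum_singleton]
  have hcyclic := clsMulSq_cyclic (isHomogeneous_X kk i) (isHomogeneous_X kk j)
    (isHomogeneous_X kk k) (X i * X j * X l * mon e ^ 2)
  rw [add_assoc, cohit_add_eq_zero] at hcyclic
  convert hcyclic using 3 <;> simp only [huniv, mon_add, mon_two_smul, mon_ε] <;> ring

theorem clsMulSq_X_mul_X_mem (hr : 3 ≤ r) (i j : Fin 4) {g : P4}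
    (hg : g.IsHomogeneous (wordDegree r s)) :
    clsMulSq (X i * X j) g ∈ (diracSpan r (s + 1)).map cls := by
  induction s generalizing i j g with
  | zero => exact clsMulSq_X_mul_X_mem_zero hr i j hg
  | succ s ih =>
    have pair (i j a b : Fin 4) {e : Fin 4 →₀ ℕ} (he : e.degree = wordDegree r s) :
        clsMulSq (X i * X j) (X a * X b * mon e ^ 2) ∈ (diracSpan r (s + 2)).map cls :=
      clsMulSq_X_mul_X_mem_of_cls_mem hr i j (ih a b (isHomogeneous_monomial 1 he))
    suffices homogeneousSubmodule (Fin 4) kk (wordDegree r (s + 1)) ≤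
      ((diracSpan r (s + 2)).map cls).comap (clsMulSq (X i * X j)) from this hg
    rw [homogeneousSubmodule_eq_span_mon, Submodule.span_le]
    rintro _ ⟨c, hc : c.degree = 2 * wordDegree r s + 2, rfl⟩
    rw [SetLike.mem_coe, Submodule.mem_comap]
    obtain ⟨e, rfl⟩ | ⟨a, b, e, rfl⟩ | ⟨e, rfl⟩ :=
      eq_two_smul_or_eq_pair_add_or_eq_univ_add_of_even (c := c)
        (hc ▸ (even_two_mul _).add even_two)
    · rw [map_nsmul, smul_eq_mul] at hc
      rw [clsMulSq_mul_eq_zero_of_mem_hits (isHomogeneous_X kk i) (isHomogeneous_X kk j)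
        (cls_eq_zero.1 (cls_mon_two_smul (by omega)))]
      exact zero_mem _
    · simp only [map_add, map_nsmul, Finsupp.degree_single, smul_eq_mul] at hc
      rw [mon_add, mon_add, mon_two_smul, mon_ε, mon_ε]
      exact pair i j a b (by omega)
    · simp only [map_add, map_nsmul, degree_sum_ε, Finset.card_univ, Fintype.card_fin,
        smul_eq_mul] at hc
      have he (x : Fin 4) : (ε x + e).degree = wordDegree r s := by
        rw [map_add, Finsupp.degree_single]
        omega
      obtain rfl | hij := eq_or_ne i j
      · rw [← pow_two, clsMulSq_apply, cls_eq_zero.2 (sq_mul_sq_mem_hits (isHomogeneous_X kk i) _)]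
        exact zero_mem _
      · obtain ⟨k, l, h⟩ := exists_nodup_of_ne hij
        rw [clsMulSq_mul_mon_univ h]
        exact add_mem (pair i k i l (he j)) (pair j k j l (he i))

theorem clsMulSq_linForm_mul_linForm_mem (hr : 3 ≤ r) (α β : Fin 4 → kk) {g : P4}
    (hg : g.IsHomogeneous (wordDegree r s)) :
    clsMulSq (linForm α * linForm β) g ∈ (diracSpan r (s + 1)).map cls := by
  rw [← LinearMap.flip_apply, map_linForm_mul_linForm]
  exact Submodule.sum_mem _ fun i _ => Submodule.sum_mem _ fun j _ =>
    Submodule.smul_mem _ _ (clsMulSq_X_mul_X_mem hr i j hg)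

end DiracSpan

section Spikes

lemma even_choose_of_add_add_one_eq_two_pow {a n p : ℕ} (h : n + p + 1 = 2 ^ a) (hp : p ≠ 0) :
    Even (n.choose p) := by
  induction a generalizing n p with
  | zero => omega
  | succ a ih =>
    rw [pow_succ] at h
    rw [Nat.even_iff, Choose.choose_modEq_choose_mod_mul_choose_div_nat (p := 2)]
    obtain ⟨hpmod, hnmod⟩ | ⟨hpmod, hnmod⟩ : p % 2 = 0 ∧ n % 2 = 1 ∨ p % 2 = 1 ∧ n % 2 = 0 := by
      omega
    · exact Nat.even_iff.1 ((ih (by omega) (by omega)).mul_left _)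
    · rw [hpmod, hnmod, Nat.choose_zero_succ, zero_mul, Nat.zero_mod]

variable {σ : Type*}

lemma sqSeries_X_pow (i : σ) (n : ℕ) :
    sqSeries (X i ^ n) = ∑ p ∈ Finset.range (n + 1),
      Polynomial.C ((n.choose p : kk) • X i ^ (n + p)) * Polynomial.X ^ p := by
  rw [map_pow, sqSeries_of_isHomogeneous_one (isHomogeneous_X kk i), add_comm, add_pow]
  refine Finset.sum_congr rfl fun p hp => ?_
  obtain ⟨q, rfl⟩ := Nat.exists_eq_add_of_le (Finset.mem_range_succ_iff.1 hp)
  rw [Nat.add_sub_cancel_left, smul_eq_C_mul, map_natCast, map_mul, map_natCast, map_pow, map_pow]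
  ring

lemma Sq_mon [Fintype σ] [DecidableEq σ] (k : ℕ) (c : σ →₀ ℕ) :
    Sq k (mon c) = ∑ p ∈ Fintype.piFinset fun i => Finset.range (c i + 1),
      if k = ∑ i, p i then
        (∏ i, ((c i).choose (p i) : kk)) • mon (c + Finsupp.equivFunOnFinite.symm p)
      else 0 := by
  have hmon (c : σ →₀ ℕ) : mon c = ∏ i, X i ^ c i := by
    rw [mon, monomial_eq, C_1, one_mul, Finsupp.prod_fintype _ _ fun i => pow_zero _]
  rw [Sq_apply, hmon, map_prod]
  simp only [sqSeries_X_pow, Finset.prod_univ_sum, Finset.prod_mul_distrib,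
    Finset.prod_pow_eq_pow_sum, ← map_prod, Polynomial.finsetSum_coeff,
    Polynomial.coeff_C_mul_X_pow, hmon, Finset.prod_smul]
  rfl

theorem coeff_eq_zero_of_mem_hits [Finite σ] {S : σ →₀ ℕ} (hS : ∀ i, ∃ a, S i + 1 = 2 ^ a)
    {f : MvPolynomial σ kk} (hf : f ∈ hits σ) : coeff S f = 0 := by
  classical
  have := Fintype.ofFinite σ
  refine (hits_le_iff (N := LinearMap.ker (lcoeff kk S))).2 (fun k g => ?_) hf
  rw [LinearMap.mem_ker, lcoeff_apply]
  induction g using MvPolynomial.induction_on' with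
  | add p q hp hq => rw [map_add, coeff_add, hp, hq, add_zero]
  | monomial c a =>
    rw [← mul_one a, ← smul_eq_mul, ← smul_monomial, map_smul, coeff_smul, Sq_mon, coeff_sum,
      Finset.sum_eq_zero, smul_zero]
    intro p _
    split_ifs with hk
    swap
    · exact coeff_zero S
    obtain ⟨i, -, hi⟩ := Finset.exists_ne_zero_of_sum_ne_zero (hk.symm.trans_ne k.succ_ne_zero)
    rw [coeff_smul, coeff_monomial]
    split_ifs with hcS
    swap
    · exact smul_zero _
    obtain ⟨e, he⟩ := hS i
    rw [← hcS] at he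
    rw [Finset.prod_eq_zero (Finset.mem_univ i), zero_smul]
    exact (ZMod.natCast_eq_zero_iff_even).2 (even_choose_of_add_add_one_eq_two_pow he hi)

end Spikes

section SquareCoefficients

variable {σ : Type*}

lemma coeff_two_smul_sq (S : σ →₀ ℕ) (g : MvPolynomial σ kk) :
    coeff (2 • S) (g ^ 2) = coeff S g := by
  rw [← expand_zmod, coeff_expand_smul 2 two_ne_zero]

lemma coeff_sq_of_odd {S : σ →₀ ℕ} {i : σ} (h : Odd (S i)) (g : MvPolynomial σ kk) :
    coeff S (g ^ 2) = 0 := by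
  rw [← expand_zmod]
  exact coeff_expand_of_not_dvd g h.not_two_dvd_nat

lemma coeff_linForm_mul_linForm_mul_sq (S : Fin 2 →₀ ℕ) (α β : Fin 2 → kk)
    (g : MvPolynomial (Fin 2) kk) :
    coeff (ε 0 + ε 1 + 2 • S) (linForm α * linForm β * g ^ 2) =
      (α 0 * β 1 + α 1 * β 0) * coeff S g := by
  have hodd (i : Fin 2) : Odd ((ε 0 + ε 1 + 2 • S : Fin 2 →₀ ℕ) i) := by
    refine ⟨S i, ?_⟩
    fin_cases i <;> simp <;> ring
  have hsplit : linForm α * linForm β * g ^ 2 =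
      (α 0 * β 0) • (X 0 * g) ^ 2 + (α 1 * β 1) • (X 1 * g) ^ 2
        + (α 0 * β 1 + α 1 * β 0) • (mon (ε 0 + ε 1) * g ^ 2) := by
    simp only [linForm_apply, Fin.sum_univ_two, smul_eq_C_mul, mon_add, mon_ε, C_add, C_mul]
    ring
  rw [hsplit, coeff_add, coeff_add, coeff_smul, coeff_smul, coeff_smul, coeff_sq_of_odd (hodd 0),
    coeff_sq_of_odd (hodd 0), coeff_monomial_mul, coeff_two_smul_sq, smul_zero, smul_zero,
    zero_add, zero_add, one_mul, smul_eq_mul]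

lemma coeff_single_eq_eval [DecidableEq σ] (i : σ) {n : ℕ} {g : MvPolynomial σ kk}
    (hg : g.IsHomogeneous n) : coeff (Finsupp.single i n) g = eval (Pi.single i 1) g := by
  have hpoint : (Pi.single i 1 : σ → kk) = (({i} : Finset σ) : Set σ).indicator 1 := by
    ext j
    simp [Pi.single_apply, Set.indicator_apply]
  rw [← mem_homogeneousSubmodule, homogeneousSubmodule_eq_span_mon] at hg
  induction hg using Submodule.span_induction with
  | mem _ h =>
    obtain ⟨c, hc : c.degree = n, rfl⟩ := h
    rw [hpoint, eval_indicator_mon, coeff_monomial]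
    refine if_congr ?_ rfl rfl
    constructor
    · rintro rfl
      exact Finsupp.support_single_subset
    · intro h
      obtain ⟨m, rfl⟩ := Finsupp.support_subset_singleton'.1 h
      rw [← hc, Finsupp.degree_single]
  | zero => rw [map_zero, coeff_zero]
  | add f g _ _ hf hg => rw [map_add, coeff_add, hf, hg]
  | smul a g _ hg => rw [smul_eval, coeff_smul, hg, smul_eq_mul]

end SquareCoefficients

section PlaneSpikes

/-- The restriction of a polynomial function to the plane spanned by `v` and `w`, in the
coordinates given by these two vectors. -/
def restrictPlane {σ : Type*} (v w : σ → kk) :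
    MvPolynomial σ kk →ₐ[kk] MvPolynomial (Fin 2) kk :=
  aeval fun i => linForm ![v i, w i]

section Restriction

variable {σ : Type*} (v w : σ → kk)

lemma restrictPlane_X (i : σ) : restrictPlane v w (X i) = linForm ![v i, w i] := aeval_X _ i

lemma isHomogeneous_restrictPlane {n : ℕ} {f : MvPolynomial σ kk} (hf : f.IsHomogeneous n) :
    (restrictPlane v w f).IsHomogeneous n := by
  rw [← one_mul n]
  exact hf.aeval _ fun i => isHomogeneous_linForm _

lemma restrictPlane_linForm [Fintype σ] (α : σ → kk) :
    restrictPlane v w (linForm α) = linForm ![α ⬝ᵥ v, α ⬝ᵥ w] := by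
  simp only [linForm_apply, map_sum, map_smul, restrictPlane_X, Fin.sum_univ_two, smul_add,
    smul_smul, Finset.sum_add_distrib, dotProduct, Finset.sum_smul, Matrix.cons_val_zero,
    Matrix.cons_val_one]

lemma eval_restrictPlane (f : MvPolynomial σ kk) :
    eval (Pi.single 0 1) (restrictPlane v w f) = eval v f := by
  have h : (aeval (Pi.single 0 1)).comp (restrictPlane v w) = aeval v := algHom_ext fun i => by
    simp [restrictPlane_X, linForm_apply]
  simpa [coe_aeval_eq_eval] using DFunLike.congr_fun h f

end Restriction

lemma restrictPlane_substM (M : Matrix (Fin 4) (Fin 4) kk) (v w : Fin 4 → kk) (f : P4) :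
    restrictPlane v w (substM M f) = restrictPlane (M.mulVec v) (M.mulVec w) f := by
  have h : (restrictPlane v w).comp (substM M) = restrictPlane (M.mulVec v) (M.mulVec w) :=
    algHom_ext fun i => by
      rw [AlgHom.comp_apply, substM_X, restrictPlane_linForm, restrictPlane_X]
      rfl
  exact DFunLike.congr_fun h f

/-- The exponent vector `(2 ^ (r + 2 + s) - 1, 2 ^ s - 1)`. -/
def planeSpike (r : ℕ) : ℕ → Fin 2 →₀ ℕ
  | 0 => Finsupp.single 0 (2 ^ (r + 2) - 1)
  | s + 1 => ε 0 + ε 1 + 2 • planeSpike r s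

lemma planeSpike_add_one (r s : ℕ) (i : Fin 2) : ∃ a, planeSpike r s i + 1 = 2 ^ a := by
  induction s with
  | zero =>
    fin_cases i
    · exact ⟨r + 2, by simpa [planeSpike] using Nat.sub_add_cancel Nat.one_le_two_pow⟩
    · exact ⟨0, by simp [planeSpike]⟩
  | succ s ih =>
    obtain ⟨a, ha⟩ := ih
    refine ⟨a + 1, ?_⟩
    rw [pow_succ, ← ha, planeSpike]
    fin_cases i <;> simp <;> ring

/-- The coefficient of the spike `planeSpike r s` in the restriction of a polynomial to the plane
spanned by `v` and `w`. -/
def planeSpikeCoeff {σ : Type*} (r s : ℕ) (v w : σ → kk) : MvPolynomial σ kk →ₗ[kk] kk :=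
  lcoeff kk (planeSpike r s) ∘ₗ (restrictPlane v w).toLinearMap

variable {r s : ℕ}

section Values

variable {σ : Type*} (v w : σ → kk)

lemma planeSpikeCoeff_of_mem_hits {f : MvPolynomial σ kk} (hf : f ∈ hits σ) :
    planeSpikeCoeff r s v w f = 0 := by
  have h : restrictPlane v w f ∈ hits (Fin 2) :=
    algHom_mem_hits (fun i => isHomogeneous_restrictPlane v w (isHomogeneous_X kk i)) hf
  exact coeff_eq_zero_of_mem_hits (planeSpike_add_one r s) h

lemma planeSpikeCoeff_zero {f : MvPolynomial σ kk} (hf : f.IsHomogeneous (2 ^ (r + 2) - 1)) :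
    planeSpikeCoeff r 0 v w f = eval v f := by
  rw [← eval_restrictPlane v w]
  exact coeff_single_eq_eval 0 (isHomogeneous_restrictPlane v w hf)

lemma planeSpikeCoeff_mul_mul_sq [Fintype σ] (α β : σ → kk) (g : MvPolynomial σ kk) :
    planeSpikeCoeff r (s + 1) v w (linForm α * linForm β * g ^ 2) =
      ((α ⬝ᵥ v) * (β ⬝ᵥ w) + (α ⬝ᵥ w) * (β ⬝ᵥ v)) * planeSpikeCoeff r s v w g := by
  simp only [planeSpikeCoeff, LinearMap.comp_apply, AlgHom.toLinearMap_apply, map_mul, map_pow,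
    restrictPlane_linForm, lcoeff_apply, planeSpike, coeff_linForm_mul_linForm_mul_sq,
    Matrix.cons_val_zero, Matrix.cons_val_one]

end Values

lemma planeSpikeCoeff_substM (M : Matrix (Fin 4) (Fin 4) kk) (v w : Fin 4 → kk) (f : P4) :
    planeSpikeCoeff r s v w (substM M f) = planeSpikeCoeff r s (M.mulVec v) (M.mulVec w) f := by
  rw [planeSpikeCoeff, planeSpikeCoeff, LinearMap.comp_apply, LinearMap.comp_apply,
    AlgHom.toLinearMap_apply, AlgHom.toLinearMap_apply, restrictPlane_substM]

lemma prod_insert_eq_mul_prod {α : Type*} [DecidableEq α] (f : α → kk) (i : α) (S : Finset α) :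
    ∏ k ∈ insert i S, f k = f i * ∏ k ∈ S, f k := by
  by_cases hi : i ∈ S
  · have idem : ∀ x : kk, x * x = x := by decide
    rw [Finset.insert_eq_of_mem hi, ← Finset.mul_prod_erase S f hi, ← mul_assoc, idem]
  · exact Finset.prod_insert hi

theorem planeSpikeCoeff_diracWord (hr : 1 ≤ r) {v v' : Fin 4 → kk} (w : Fin 4 → kk) (hv' : v' ≠ 0)
    (l : List (Fin 4)) :
    planeSpikeCoeff r l.length v w (diracWord r v' l) =
      if v = v' then ∏ k ∈ l.toFinset, perpVec v k ⬝ᵥ w else 0 := by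
  induction l with
  | nil =>
    rw [List.length_nil, planeSpikeCoeff_zero v w (isHomogeneous_diracWord hr v' []), diracWord,
      eval_diracPoly hv', List.toFinset_nil, Finset.prod_empty]
  | cons k l ih =>
    rw [List.length_cons, diracWord, ← linForm_single, planeSpikeCoeff_mul_mul_sq, ih]
    split_ifs with h
    · subst h
      rw [single_one_dotProduct, apply_pivot hv', perpVec_dotProduct_self hv', mul_zero, add_zero,
        one_mul, List.toFinset_cons, prod_insert_eq_mul_prod]
    · rw [mul_zero]

end PlaneSpikes

section Reconstruction

variable {r s : ℕ}

lemma planeSpikeCoeff_indicator_diracWord (hr : 1 ≤ r) {v v' : Fin 4 → kk} (hv' : v' ≠ 0)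
    {U : Finset (Fin 4)} (hU : pivot v ∉ U) (l : List (Fin 4)) :
    planeSpikeCoeff r l.length v ((U : Set (Fin 4)).indicator 1) (diracWord r v' l) =
      if v = v' then if l.toFinset ⊆ U then 1 else 0 else 0 := by
  have dot (k : Fin 4) : perpVec v k ⬝ᵥ (U : Set (Fin 4)).indicator 1 = if k ∈ U then 1 else 0 := by
    rw [perpVec_dotProduct, Set.indicator_of_notMem (show pivot v ∉ (U : Set (Fin 4)) from hU),
      mul_zero, add_zero, Set.indicator_apply]
    rfl
  simp only [planeSpikeCoeff_diracWord hr _ hv', dot, Finset.prod_boole]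
  rfl

/-- The coefficient of `cls (diracWord r v l)`, for `l` with set of entries `T`, in a combination of
such classes, computed from `planeSpikeCoeff` by Möbius inversion. -/
def diracCoeff (r s : ℕ) (v : Fin 4 → kk) (T : Finset (Fin 4)) : P4 →ₗ[kk] kk :=
  ∑ U ∈ T.powerset, planeSpikeCoeff r s v ((U : Set (Fin 4)).indicator 1)

lemma diracCoeff_diracWord (hr : 1 ≤ r) {v v' : Fin 4 → kk} (hv' : v' ≠ 0) {T : Finset (Fin 4)}
    (hT : pivot v ∉ T) (l : List (Fin 4)) :
    diracCoeff r l.length v T (diracWord r v' l) =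
      if v = v' then if l.toFinset = T then 1 else 0 else 0 := by
  rw [diracCoeff, LinearMap.sum_apply, Finset.sum_congr rfl fun U hU =>
    planeSpikeCoeff_indicator_diracWord hr hv' (fun h => hT (Finset.mem_powerset.1 hU h)) l]
  by_cases h : v = v'
  · simp only [if_pos h, sum_powerset_ite_subset]
  · simp only [if_neg h, Finset.sum_const_zero]

lemma sum_diracCoeff_diracWord_smul (hr : 1 ≤ r) (v : Fin 4 → kk) {v' : Fin 4 → kk} (hv' : v' ≠ 0)
    {l : List (Fin 4)} (hl : l.length = s + 1) :
    ∑ T ∈ ({pivot v}ᶜ : Finset (Fin 4)).powerset,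
      diracCoeff r (s + 1) v T (diracWord r v' l) • cls (diracWord r v (paddedList (s + 1) T)) =
        if v = v' then cls (diracWord r v' l) else 0 := by
  have coeff_eq {T : Finset (Fin 4)} (hT : T ∈ ({pivot v}ᶜ : Finset (Fin 4)).powerset) :
      diracCoeff r (s + 1) v T (diracWord r v' l) =
        if v = v' then if l.toFinset = T then 1 else 0 else 0 := by
    rw [← hl]
    exact diracCoeff_diracWord hr hv' (fun h => by simpa using Finset.mem_powerset.1 hT h) l
  rw [Finset.sum_congr rfl fun T hT => by rw [coeff_eq hT]]
  split_ifs with h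
  swap
  · simp only [zero_smul, Finset.sum_const_zero]
  subst h
  simp only [ite_smul, one_smul, zero_smul, Finset.sum_ite_eq, Finset.mem_powerset]
  split_ifs with hpivot
  · have hne : l.toFinset.Nonempty :=
      (List.toFinset_nonempty_iff l).2 (List.ne_nil_of_length_eq_add_one hl)
    exact cls_diracWord_congr ((length_paddedList (hl ▸ l.toFinset_card_le)).trans hl.symm)
      (toFinset_paddedList _ hne)
  · have hmem : pivot v ∈ l := by simpa [Finset.subset_compl_singleton] using hpivot
    rw [diracWord_eq_zero_of_pivot_mem hv' hmem, map_zero]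

theorem cls_eq_sum_diracCoeff (hr : 1 ≤ r) {f : P4} (hf : f ∈ diracSpan r (s + 1)) :
    cls f = ∑ v ∈ {0}ᶜ, ∑ T ∈ ({pivot v}ᶜ : Finset (Fin 4)).powerset,
      diracCoeff r (s + 1) v T f • cls (diracWord r v (paddedList (s + 1) T)) := by
  let recon : P4 →ₗ[kk] Cohit (Fin 4) := ∑ v ∈ {0}ᶜ, ∑ T ∈ ({pivot v}ᶜ : Finset (Fin 4)).powerset,
    (diracCoeff r (s + 1) v T).smulRight (cls (diracWord r v (paddedList (s + 1) T)))
  suffices diracSpan r (s + 1) ≤ LinearMap.eqLocus cls recon by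
    simpa only [recon, LinearMap.mem_eqLocus, LinearMap.sum_apply, LinearMap.smulRight_apply]
      using this hf
  refine diracSpan_le_iff.2 fun v' l hv' hl => ?_
  simp only [recon, LinearMap.mem_eqLocus, LinearMap.sum_apply, LinearMap.smulRight_apply,
    sum_diracCoeff_diracWord_smul hr _ hv' hl, Finset.sum_ite_eq', Finset.mem_compl,
    Finset.mem_singleton, hv', not_false_eq_true, if_true]

theorem mem_hits_of_planeSpikeCoeff_eq_zero (hr : 1 ≤ r) {f : P4} (hf : f ∈ diracSpan r (s + 1))
    (h : ∀ v w, planeSpikeCoeff r (s + 1) v w f = 0) : f ∈ hits (Fin 4) := by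
  rw [← cls_eq_zero, cls_eq_sum_diracCoeff hr hf]
  simp only [diracCoeff, LinearMap.sum_apply, h, Finset.sum_const_zero, zero_smul]

end Reconstruction

section LinearIndependentPairs

lemma exists_linearEquiv_apply_eq {K V ι : Type*} [Field K] [AddCommGroup V] [Module K V]
    [Finite ι] {x y : ι → V} (hx : LinearIndependent K x) (hy : LinearIndependent K y) :
    ∃ g : V ≃ₗ[K] V, ∀ i, g (x i) = y i := by
  have : FiniteDimensional K (Submodule.span K (Set.range x)) :=
    FiniteDimensional.span_of_finite K (Set.finite_range x)
  obtain ⟨g, hg⟩ := Submodule.exists_linearEquiv_restrict_eq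
    (hx.linearCombinationEquiv.symm ≪≫ₗ hy.linearCombinationEquiv)
  refine ⟨g, fun i => ?_⟩
  have hxi : (hx.linearCombinationEquiv (Finsupp.single i 1) : V) = x i := by simp
  rw [← hxi, ← hg]
  simp

lemma exists_isUnit_mulVec_eq {K n ι : Type*} [Field K] [Fintype n] [DecidableEq n] [Finite ι]
    {x y : ι → n → K} (hx : LinearIndependent K x) (hy : LinearIndependent K y) :
    ∃ M : Matrix n n K, IsUnit M ∧ ∀ i, M.mulVec (x i) = y i := by
  obtain ⟨g, hg⟩ := exists_linearEquiv_apply_eq hx hy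
  refine ⟨LinearMap.toMatrix' g, Matrix.mulVec_injective_iff_isUnit.1 fun a b h => ?_, fun i => ?_⟩
  · rw [LinearMap.toMatrix'_mulVec, LinearMap.toMatrix'_mulVec] at h
    exact g.injective h
  · rw [LinearMap.toMatrix'_mulVec, LinearEquiv.coe_coe, hg]

lemma linearIndependent_pair_iff_exists_perpVec {σ : Type*} [Nonempty σ] [DecidableEq σ]
    [Fintype σ] {v : σ → kk} (hv : v ≠ 0) (w : σ → kk) :
    LinearIndependent kk ![v, w] ↔ ∃ k, perpVec v k ⬝ᵥ w ≠ 0 := by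
  rw [LinearIndependent.pair_iff' hv]
  constructor
  · intro h
    obtain ⟨k, hk⟩ := Function.ne_iff.1 (h (w (pivot v)))
    refine ⟨k, fun h0 => hk ?_⟩
    rw [perpVec_dotProduct, CharTwo.add_eq_zero] at h0
    rw [h0, Pi.smul_apply, smul_eq_mul, mul_comm]
  · rintro ⟨k, hk⟩ a rfl
    exact hk (by rw [dotProduct_smul, perpVec_dotProduct_self hv, smul_zero])

end LinearIndependentPairs

section InvariantClasses

/-- The polynomials whose class in the space of cohits is invariant under `GL₄(F₂)`. -/
def glInvariants : Submodule kk P4 :=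
  ⨅ M ∈ glSet, LinearMap.eqLocus (cls ∘ₗ (substM M).toLinearMap) cls

lemma mem_glInvariants {f : P4} : f ∈ glInvariants ↔ ∀ M ∈ glSet, cls (substM M f) = cls f := by
  simp only [glInvariants, Submodule.mem_iInf]
  rfl

variable {r s : ℕ} {f : P4}

lemma planeSpikeCoeff_eq_of_cls_eq {σ : Type*} (v w : σ → kk) {f g : MvPolynomial σ kk}
    (h : cls f = cls g) : planeSpikeCoeff r s v w f = planeSpikeCoeff r s v w g := by
  rw [← sub_eq_zero, ← map_sub]
  exact planeSpikeCoeff_of_mem_hits v w (cls_eq_cls.1 h)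

lemma planeSpikeCoeff_eq_zero_of_not_linearIndependent (hr : 1 ≤ r) (hf : f ∈ diracSpan r (s + 1))
    {v w : Fin 4 → kk} (h : ¬LinearIndependent kk ![v, w]) :
    planeSpikeCoeff r (s + 1) v w f = 0 := by
  refine (diracSpan_le_iff (N := LinearMap.ker (planeSpikeCoeff r (s + 1) v w))).2
    (fun v' l hv' hl => ?_) hf
  rw [LinearMap.mem_ker, ← hl, planeSpikeCoeff_diracWord hr w hv']
  split_ifs with hvv'
  · subst hvv'
    rw [linearIndependent_pair_iff_exists_perpVec hv'] at h
    push Not at h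
    obtain ⟨k, hk⟩ := (List.toFinset_nonempty_iff l).2 (List.ne_nil_of_length_eq_add_one hl)
    exact Finset.prod_eq_zero hk (h k)
  · rfl

lemma planeSpikeCoeff_eq_of_mem_glInvariants (hf : f ∈ glInvariants) {v w v' w' : Fin 4 → kk}
    (h : LinearIndependent kk ![v, w]) (h' : LinearIndependent kk ![v', w']) :
    planeSpikeCoeff r s v w f = planeSpikeCoeff r s v' w' f := by
  obtain ⟨M, hM, hMx⟩ := exists_isUnit_mulVec_eq h h'
  rw [← planeSpikeCoeff_eq_of_cls_eq v w (mem_glInvariants.1 hf M hM), planeSpikeCoeff_substM]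
  exact congrArg₂ (planeSpikeCoeff r s · · f) (hMx 0) (hMx 1)

/-- The common value of the coefficients of an invariant class in `diracSpan r s` at the linearly
independent pairs of vectors. -/
def invariantCoeff (r s : ℕ) : P4 →ₗ[kk] kk :=
  planeSpikeCoeff r s (Pi.single 0 1) (Pi.single 1 1)

lemma linearIndependent_single_single :
    LinearIndependent kk ![(Pi.single 0 1 : Fin 4 → kk), Pi.single 1 1] := by
  refine (LinearIndependent.pair_iff' (Pi.single_ne_zero_iff.2 one_ne_zero)).2 fun a h => ?_
  simpa using congrFun h 1

open Classical in
theorem planeSpikeCoeff_eq_ite (hr : 1 ≤ r) (hf : f ∈ diracSpan r (s + 1) ⊓ glInvariants)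
    (v w : Fin 4 → kk) :
    planeSpikeCoeff r (s + 1) v w f =
      if LinearIndependent kk ![v, w] then invariantCoeff r (s + 1) f else 0 := by
  split_ifs with h
  · exact planeSpikeCoeff_eq_of_mem_glInvariants hf.2 h linearIndependent_single_single
  · exact planeSpikeCoeff_eq_zero_of_not_linearIndependent hr hf.1 h

theorem mem_hits_of_invariantCoeff_eq_zero (hr : 1 ≤ r)
    (hf : f ∈ diracSpan r (s + 1) ⊓ glInvariants) (h : invariantCoeff r (s + 1) f = 0) :
    f ∈ hits (Fin 4) :=
  mem_hits_of_planeSpikeCoeff_eq_zero hr hf.1 fun v w => by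
    rw [planeSpikeCoeff_eq_ite hr hf, h, ite_self]

-- Over `F₂` a polynomial in three variables of degree less than `3` sums to zero over all points.
lemma sum_planeSpikeCoeff_vecCons_zero (hr : 1 ≤ r) (hs : s < 3) (hf : f ∈ diracSpan r s) :
    ∑ u : Fin 3 → kk, planeSpikeCoeff r s (Pi.single 0 1) (Matrix.vecCons 0 u) f = 0 := by
  let total : P4 →ₗ[kk] kk :=
    ∑ u : Fin 3 → kk, planeSpikeCoeff r s (Pi.single 0 1) (Matrix.vecCons 0 u)
  suffices diracSpan r s ≤ LinearMap.ker total by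
    simpa only [total, LinearMap.mem_ker, LinearMap.sum_apply] using this hf
  refine diracSpan_le_iff.2 fun v l hv hl => ?_
  rw [LinearMap.mem_ker, LinearMap.sum_apply, ← hl]
  simp only [planeSpikeCoeff_diracWord hr _ hv]
  split_ifs
  swap
  · exact Finset.sum_const_zero
  let p : MvPolynomial (Fin 3) kk :=
    ∏ k ∈ l.toFinset, linForm (Matrix.vecTail (perpVec (Pi.single 0 1) k))
  have hp : p.totalDegree < (Fintype.card kk - 1) * Fintype.card (Fin 3) := by
    refine ((IsHomogeneous.prod l.toFinset _ (fun _ => 1) fun k _ =>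
      isHomogeneous_linForm _).totalDegree_le).trans_lt ?_
    rw [Finset.sum_const, smul_eq_mul, mul_one, ZMod.card, Fintype.card_fin]
    exact (l.toFinset_card_le.trans hl.le).trans_lt hs
  refine (Finset.sum_congr rfl fun u _ => ?_).trans (sum_eval_eq_zero p hp)
  simp only [p, map_prod, eval_linForm, Matrix.dotProduct_cons, mul_zero, zero_add]

lemma linearIndependent_single_vecCons_zero_iff {u : Fin 3 → kk} :
    LinearIndependent kk ![Pi.single 0 1, Matrix.vecCons 0 u] ↔ u ≠ 0 := by
  rw [LinearIndependent.pair_iff' (Pi.single_ne_zero_iff.2 one_ne_zero)]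
  constructor
  · rintro h rfl
    exact h 0 (by simp)
  · rintro hu a h
    refine hu (funext fun k => ?_)
    simpa using (congrFun h k.succ).symm

theorem invariantCoeff_eq_zero (hr : 1 ≤ r) (hs : s + 1 < 3)
    (hf : f ∈ diracSpan r (s + 1) ⊓ glInvariants) : invariantCoeff r (s + 1) f = 0 := by
  have hvalue (u : Fin 3 → kk) :
      planeSpikeCoeff r (s + 1) (Pi.single 0 1) (Matrix.vecCons 0 u) f =
        invariantCoeff r (s + 1) f + if u = 0 then invariantCoeff r (s + 1) f else 0 := by
    rw [planeSpikeCoeff_eq_ite hr hf, linearIndependent_single_vecCons_zero_iff]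
    by_cases hu : u = 0
    · rw [if_neg (not_not.2 hu), if_pos hu, CharTwo.add_self_eq_zero]
    · rw [if_pos hu, if_neg hu, add_zero]
  have hsum := sum_planeSpikeCoeff_vecCons_zero hr hs hf.1
  simpa [hvalue, Finset.sum_add_distrib, show (8 : kk) = 0 from rfl] using hsum

end InvariantClasses

section InvariantWord

variable {r s : ℕ} {f : P4}

lemma cls_substM_mem (hr : 3 ≤ r) (M : Matrix (Fin 4) (Fin 4) kk) (hf : f ∈ diracSpan r (s + 1)) :
    cls (substM M f) ∈ (diracSpan r (s + 1)).map cls := by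
  refine (diracSpan_le_iff (N := ((diracSpan r (s + 1)).map cls).comap
    (cls ∘ₗ (substM M).toLinearMap))).2 (fun v l _ hl => ?_) hf
  obtain ⟨k, l, rfl⟩ := List.exists_cons_of_length_eq_add_one hl
  have hsubst (α : Fin 4 → kk) : substM M (linForm α) = linForm (Matrix.vecMul α M) := by
    rw [linForm_apply, Matrix.vecMul_eq_sum]
    simp only [map_sum, map_smul, substM_X]
  have hword : (substM M (diracWord r v l)).IsHomogeneous (wordDegree r s) :=
    Nat.succ_injective hl ▸ isHomogeneous_substM M (isHomogeneous_diracWord (by omega) v l)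
  rw [Submodule.mem_comap, LinearMap.comp_apply, AlgHom.toLinearMap_apply, diracWord,
    ← linForm_single, map_mul (substM M), map_mul (substM M), map_pow, hsubst, hsubst]
  exact clsMulSq_linForm_mul_linForm_mem hr _ _ hword

/-- A representative of the nonzero invariant class in the image of `diracSpan r s`, for `s ≥ 3`:
the sum of the `diracWord r v l` over all `v ≠ 0` and all nonempty sets of entries of `l` avoiding
`pivot v`. -/
def invariantWord (r s : ℕ) : P4 :=
  ∑ v ∈ ({0}ᶜ : Finset (Fin 4 → kk)), ∑ T ∈ ({pivot v}ᶜ : Finset (Fin 4)).powerset.erase ∅,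
    diracWord r v (paddedList s T)

lemma length_paddedList_of_subset_compl_pivot (hs : 3 ≤ s) {v : Fin 4 → kk} {T : Finset (Fin 4)}
    (hT : T ⊆ {pivot v}ᶜ) : (paddedList s T).length = s := by
  refine length_paddedList ((Finset.card_le_card hT).trans ?_)
  rwa [Finset.card_compl, Fintype.card_fin, Finset.card_singleton]

lemma invariantWord_mem_diracSpan (hs : 3 ≤ s) : invariantWord r s ∈ diracSpan r s :=
  Submodule.sum_mem _ fun _ hv => Submodule.sum_mem _ fun _ hT =>
    diracWord_mem_diracSpan (by simpa using hv) (length_paddedList_of_subset_compl_pivot hs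
      (Finset.mem_powerset.1 (Finset.mem_of_mem_erase hT)))

open Classical in
lemma sum_powerset_erase_empty_prod_perpVec {σ : Type*} [Nonempty σ] [DecidableEq σ] [Fintype σ]
    {v : σ → kk} (hv : v ≠ 0) (w : σ → kk) :
    ∑ T ∈ ({pivot v}ᶜ : Finset σ).powerset.erase ∅, ∏ k ∈ T, perpVec v k ⬝ᵥ w =
      if LinearIndependent kk ![v, w] then 1 else 0 := by
  have h := Finset.prod_one_add (f := fun k => perpVec v k ⬝ᵥ w) ({pivot v}ᶜ : Finset σ)
  rw [← Finset.add_sum_erase _ _ (Finset.empty_mem_powerset _), Finset.prod_empty,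
    ← sub_eq_iff_eq_add'] at h
  rw [← h]
  split_ifs with hindep <;> rw [linearIndependent_pair_iff_exists_perpVec hv] at hindep
  · obtain ⟨k, hk⟩ := hindep
    have hkpivot : k ∈ ({pivot v}ᶜ : Finset σ) := by
      rw [Finset.mem_compl, Finset.mem_singleton]
      rintro rfl
      exact hk (by rw [perpVec_pivot hv, zero_dotProduct])
    rw [Finset.prod_eq_zero hkpivot (by rw [Fin.eq_one_of_ne_zero _ hk]; rfl)]
    rfl
  · push Not at hindep
    simp only [hindep, add_zero, Finset.prod_const_one, sub_self]

open Classical in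
lemma planeSpikeCoeff_invariantWord (hr : 1 ≤ r) (hs : 3 ≤ s) (v w : Fin 4 → kk) :
    planeSpikeCoeff r s v w (invariantWord r s) =
      if LinearIndependent kk ![v, w] then 1 else 0 := by
  have hword {v' : Fin 4 → kk} (hv' : v' ≠ 0) {T : Finset (Fin 4)}
      (hT : T ∈ ({pivot v'}ᶜ : Finset (Fin 4)).powerset.erase ∅) :
      planeSpikeCoeff r s v w (diracWord r v' (paddedList s T)) =
        if v = v' then ∏ k ∈ T, perpVec v k ⬝ᵥ w else 0 := by
    obtain ⟨hne, hT⟩ := Finset.mem_erase.1 hT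
    have h := planeSpikeCoeff_diracWord hr (v := v) w hv' (paddedList s T)
    rwa [length_paddedList_of_subset_compl_pivot hs (Finset.mem_powerset.1 hT),
      toFinset_paddedList s (Finset.nonempty_iff_ne_empty.2 hne)] at h
  have hsum {v' : Fin 4 → kk} (hv' : v' ∈ ({0}ᶜ : Finset (Fin 4 → kk))) :
      planeSpikeCoeff r s v w (∑ T ∈ ({pivot v'}ᶜ : Finset (Fin 4)).powerset.erase ∅,
        diracWord r v' (paddedList s T)) =
        if v = v' then if LinearIndependent kk ![v', w] then 1 else 0 else 0 := by
    have hv'0 : v' ≠ 0 := by simpa using hv'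
    rw [map_sum, Finset.sum_congr rfl fun T hT => hword hv'0 hT]
    by_cases h : v = v'
    · subst h
      simp only [if_true, sum_powerset_erase_empty_prod_perpVec hv'0 w]
    · simp only [if_neg h, Finset.sum_const_zero]
  rw [invariantWord, map_sum, Finset.sum_congr rfl fun v' hv' => hsum hv', Finset.sum_ite_eq]
  by_cases hv : v = 0
  · have hdep : ¬LinearIndependent kk ![v, w] := fun h => h.ne_zero 0 hv
    rw [if_neg hdep, ite_self]
  · rw [if_pos (by simpa using hv)]

theorem invariantWord_mem_glInvariants (hr : 3 ≤ r) (hs : 3 ≤ s + 1) :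
    invariantWord r (s + 1) ∈ glInvariants := by
  classical
  refine mem_glInvariants.2 fun M hM => ?_
  have hmem := invariantWord_mem_diracSpan (r := r) hs
  obtain ⟨g, hg, hgcls⟩ := cls_substM_mem hr M hmem
  have hindep (v w : Fin 4 → kk) :
      LinearIndependent kk ![M.mulVec v, M.mulVec w] ↔ LinearIndependent kk ![v, w] := by
    have h := LinearMap.linearIndependent_iff_of_injOn (v := ![v, w]) M.mulVecLin
      (Matrix.mulVec_injective_iff_isUnit.2 hM).injOn
    rwa [← FinVec.map_eq] at h
  rw [← hgcls, cls_eq_cls]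
  refine mem_hits_of_planeSpikeCoeff_eq_zero (by omega) (sub_mem hg hmem) fun v w => ?_
  rw [map_sub, planeSpikeCoeff_eq_of_cls_eq v w hgcls, planeSpikeCoeff_substM,
    planeSpikeCoeff_invariantWord (by omega) hs, planeSpikeCoeff_invariantWord (by omega) hs]
  simp only [hindep, sub_self]

theorem invariantCoeff_invariantWord (hr : 1 ≤ r) (hs : 3 ≤ s) :
    invariantCoeff r s (invariantWord r s) = 1 := by
  rw [invariantCoeff, planeSpikeCoeff_invariantWord hr hs, if_pos linearIndependent_single_single]

end InvariantWord

section Kameko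

variable {r s m : ℕ}

lemma kameko_mon (c : Fin 4 →₀ ℕ) :
    kameko (mon c) = if ∀ i, c i % 2 = 1 then mon (halfExp c) else 0 := by
  refine ((basisMonomials (Fin 4) kk).constr_basis kk _ c).trans ?_
  congr

lemma kameko_mon_two_smul (e : Fin 4 →₀ ℕ) : kameko (mon (2 • e)) = 0 := by
  rw [kameko_mon, if_neg]
  intro h
  simpa using h 0

lemma kameko_mon_univ_add (e : Fin 4 →₀ ℕ) : kameko (mon (∑ i, ε i + 2 • e)) = mon e := by
  have happly (i : Fin 4) : (∑ i, ε i + 2 • e : Fin 4 →₀ ℕ) i = 2 * e i + 1 := by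
    fin_cases i <;> simp [Fin.sum_univ_four] <;> ring
  rw [kameko_mon, if_pos fun i => by rw [happly]; omega]
  congr 1
  ext i
  rw [halfExp, Finsupp.mapRange_apply, happly]
  omega

lemma kameko_X_mul_X_mul_sq (i j : Fin 4) (g : P4) : kameko (X i * X j * g ^ 2) = 0 := by
  suffices kameko ∘ₗ mulSq (X i * X j) = 0 from LinearMap.congr_fun this g
  refine (basisMonomials (Fin 4) kk).ext fun e => ?_
  have hmon : X i * X j * mon e ^ 2 = mon (ε i + ε j + 2 • e) := by
    rw [mon_add, mon_add, mon_two_smul, mon_ε, mon_ε]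
  obtain ⟨k, hki, hkj⟩ := (by decide : ∀ i j : Fin 4, ∃ k, k ≠ i ∧ k ≠ j) i j
  rw [coe_basisMonomials, LinearMap.comp_apply, mulSq_apply]
  change kameko (X i * X j * mon e ^ 2) = 0
  rw [hmon, kameko_mon, if_neg]
  intro h
  simpa [Finsupp.single_apply, hki.symm, hkj.symm] using h k

lemma kameko_linForm_mul_linForm_mul_sq (α β : Fin 4 → kk) (g : P4) :
    kameko (linForm α * linForm β * g ^ 2) = 0 := by
  have h := map_linForm_mul_linForm (kameko ∘ₗ LinearMap.mulRight kk (g ^ 2)) α β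
  simpa [kameko_X_mul_X_mul_sq] using h

lemma isHomogeneous_kameko {f : P4} (hf : f.IsHomogeneous (2 * m + 4)) :
    (kameko f).IsHomogeneous m := by
  suffices homogeneousSubmodule (Fin 4) kk (2 * m + 4) ≤
    (homogeneousSubmodule (Fin 4) kk m).comap kameko from this hf
  rw [homogeneousSubmodule_eq_span_mon, Submodule.span_le]
  rintro _ ⟨c, hc : c.degree = 2 * m + 4, rfl⟩
  rw [SetLike.mem_coe, Submodule.mem_comap]
  obtain ⟨e, rfl⟩ | ⟨i, j, e, rfl⟩ | ⟨e, rfl⟩ :=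
    eq_two_smul_or_eq_pair_add_or_eq_univ_add_of_even (c := c) ⟨m + 2, by omega⟩
  · rw [kameko_mon_two_smul]
    exact zero_mem _
  · rw [mon_add, mon_add, mon_two_smul, mon_ε, mon_ε, kameko_X_mul_X_mul_sq]
    exact zero_mem _
  · rw [kameko_mon_univ_add]
    simp only [map_add, map_nsmul, degree_sum_ε, Finset.card_univ, Fintype.card_fin,
      smul_eq_mul] at hc
    exact isHomogeneous_monomial 1 (by omega)

lemma cls_sub_clsMulSq_kameko_mem (hr : 3 ≤ r) {f : P4}
    (hf : f.IsHomogeneous (wordDegree r (s + 1))) :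
    cls f - clsMulSq (∏ i, X i) (kameko f) ∈ (diracSpan r (s + 1)).map cls := by
  suffices homogeneousSubmodule (Fin 4) kk (wordDegree r (s + 1)) ≤
    ((diracSpan r (s + 1)).map cls).comap (cls - clsMulSq (∏ i, X i) ∘ₗ kameko) from this hf
  rw [homogeneousSubmodule_eq_span_mon, Submodule.span_le]
  rintro _ ⟨c, hc : c.degree = 2 * wordDegree r s + 2, rfl⟩
  rw [SetLike.mem_coe, Submodule.mem_comap, LinearMap.sub_apply, LinearMap.comp_apply]
  obtain ⟨e, rfl⟩ | ⟨i, j, e, rfl⟩ | ⟨e, rfl⟩ :=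
    eq_two_smul_or_eq_pair_add_or_eq_univ_add_of_even (c := c)
      (hc ▸ (even_two_mul _).add even_two)
  · rw [map_nsmul, smul_eq_mul] at hc
    rw [cls_mon_two_smul (by omega), kameko_mon_two_smul, map_zero, sub_zero]
    exact zero_mem _
  · simp only [map_add, map_nsmul, Finsupp.degree_single, smul_eq_mul] at hc
    rw [mon_add, mon_add, mon_two_smul, mon_ε, mon_ε, kameko_X_mul_X_mul_sq, map_zero, sub_zero]
    exact clsMulSq_X_mul_X_mem hr i j (isHomogeneous_monomial 1 (by omega))
  · have hprod : mon (∑ i : Fin 4, ε i) = ∏ i, X i := by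
      simp only [Fin.sum_univ_four, Fin.prod_univ_four, mon_add, mon_ε]
    rw [kameko_mon_univ_add, mon_add, mon_two_smul, hprod, clsMulSq_apply, sub_self]
    exact zero_mem _

lemma clsMulSq_prod_X_mem_of_mem_hitSub (hr : 3 ≤ r) (hm : m + 1 = wordDegree r s) {p : P4}
    (hp : p ∈ hitSub m) : clsMulSq (∏ i, X i) p ∈ (diracSpan r (s + 1)).map cls := by
  suffices hitSub m ≤ ((diracSpan r (s + 1)).map cls).comap (clsMulSq (∏ i, X i)) from this hp
  refine Submodule.span_le.2 ?_
  rintro _ ⟨d, hdm, g, hg, rfl⟩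
  obtain ⟨k, rfl⟩ := Nat.exists_eq_add_of_lt hdm
  have hhom := isHomogeneous_X (σ := Fin 4) kk
  have hmem (a b c d : Fin 4) :
      clsMulSq (X a * X b) (X c * X d * Sq k g) ∈ (diracSpan r (s + 1)).map cls := by
    refine clsMulSq_X_mul_X_mem hr a b ?_
    convert ((hhom c).mul (hhom d)).mul (isHomogeneous_Sq k hg) using 1
    omega
  rw [SetLike.mem_coe, Submodule.mem_comap, add_assoc, homogeneousComponent_sqTotal (k + 1) hg,
    Fin.prod_univ_four, clsMulSq_Sq_succ (hhom 0) (hhom 1) (hhom 2) (hhom 3), pairSplitSum_apply]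
  iterate 5 refine add_mem ?_ (hmem _ _ _ _)
  exact hmem _ _ _ _

end Kameko

section ClassesInDegree

variable {n : ℕ} {f g : P4}

lemma Qmk_eq_zero_iff (hf : f.IsHomogeneous n) : Qmk n f = 0 ↔ f ∈ hits (Fin 4) := by
  rw [Qmk, LinearMap.comp_apply, Submodule.mkQ_apply, Submodule.Quotient.mk_eq_zero,
    ← mem_hitSub_iff hf]
  exact iff_of_eq (congrArg (· ∈ hitSub n) (homogeneousComponent_eq_self hf))

lemma Qmk_eq_Qmk_iff (hf : f.IsHomogeneous n) (hg : g.IsHomogeneous n) :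
    Qmk n f = Qmk n g ↔ cls f = cls g := by
  rw [← sub_eq_zero, ← map_sub, Qmk_eq_zero_iff (hf.sub hg), cls_eq_cls]

lemma mem_glInvariants_of_cls_eq (hf : f ∈ glInvariants) (h : cls f = cls g) :
    g ∈ glInvariants := by
  refine mem_glInvariants.2 fun M hM => ?_
  rw [← h, ← mem_glInvariants.1 hf M hM, eq_comm, cls_eq_cls, ← map_sub]
  exact algHom_mem_hits (isHomogeneous_substM_X M) (cls_eq_cls.1 h)

lemma mem_invPre_glSet_iff (hf : f.IsHomogeneous n) : f ∈ invPre n glSet ↔ f ∈ glInvariants := by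
  simp only [invPre, Submodule.mem_inf, Submodule.mem_iInf, Submodule.mem_comap,
    LinearMap.sub_apply, AlgHom.toLinearMap_apply, LinearMap.id_apply, mem_glInvariants, cls_eq_cls]
  exact (and_iff_right hf).trans (forall₂_congr fun M _ =>
    mem_hitSub_iff ((isHomogeneous_substM M hf).sub hf))

lemma Qmk_mem_QInv_glSet_iff (hf : f.IsHomogeneous n) :
    Qmk n f ∈ QInv n glSet ↔ f ∈ glInvariants := by
  constructor
  · rintro ⟨g, hg, hgf⟩
    have hghom : g.IsHomogeneous n := hg.1
    exact mem_glInvariants_of_cls_eq ((mem_invPre_glSet_iff hghom).1 hg)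
      ((Qmk_eq_Qmk_iff hghom hf).1 hgf)
  · exact fun h => Submodule.mem_map_of_mem ((mem_invPre_glSet_iff hf).2 h)

end ClassesInDegree

section KamekoKernel

variable {r s m : ℕ}

lemma wordDegree_succ_eq (hm : m + 1 = wordDegree r s) : wordDegree r (s + 1) = 2 * m + 4 := by
  rw [wordDegree, ← hm]
  ring

lemma diracSpan_le_homog (hr : 1 ≤ r) (hm : m + 1 = wordDegree r s) :
    diracSpan r (s + 1) ≤ homog (2 * m + 4) :=
  wordDegree_succ_eq hm ▸ diracSpan_le_homogeneousSubmodule hr (s + 1)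

theorem kamekoKer_eq_map_diracSpan (hr : 3 ≤ r) (hm : m + 1 = wordDegree r s) :
    kamekoKer m = (diracSpan r (s + 1)).map (Qmk (2 * m + 4)) := by
  have hspan := diracSpan_le_homog (by omega) hm
  refine le_antisymm ?_ (Submodule.map_mono (le_inf hspan ?_))
  · rintro _ ⟨f, ⟨hf, hker⟩, rfl⟩
    have hhit : kameko f ∈ hitSub m := (mem_hitSub_iff (isHomogeneous_kameko hf)).2
      ((Qmk_eq_zero_iff (isHomogeneous_kameko hf)).1 hker)
    obtain ⟨g, hg, hgf⟩ : cls f ∈ (diracSpan r (s + 1)).map cls := by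
      rw [← sub_add_cancel (cls f) (clsMulSq (∏ i, X i) (kameko f))]
      exact add_mem (cls_sub_clsMulSq_kameko_mem hr (wordDegree_succ_eq hm ▸ hf))
        (clsMulSq_prod_X_mem_of_mem_hitSub hr hm hhit)
    exact ⟨g, hg, (Qmk_eq_Qmk_iff (hspan hg) hf).2 hgf⟩
  · refine diracSpan_le_iff.2 fun v l _ hl => ?_
    obtain ⟨k, l, rfl⟩ := List.exists_cons_of_length_eq_add_one hl
    rw [Submodule.mem_comap, LinearMap.mem_ker, diracWord, ← linForm_single,
      kameko_linForm_mul_linForm_mul_sq, map_zero]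

theorem kamekoKer_inf_QInv_glSet_eq_map (hr : 3 ≤ r) (hm : m + 1 = wordDegree r s) :
    kamekoKer m ⊓ QInv (2 * m + 4) glSet =
      (diracSpan r (s + 1) ⊓ glInvariants).map (Qmk (2 * m + 4)) := by
  have hspan := diracSpan_le_homog (by omega) hm
  rw [kamekoKer_eq_map_diracSpan hr hm]
  apply le_antisymm
  · rintro _ ⟨⟨f, hf, rfl⟩, hinv⟩
    exact ⟨f, ⟨hf, (Qmk_mem_QInv_glSet_iff (hspan hf)).1 hinv⟩, rfl⟩
  · rintro _ ⟨f, ⟨hf, hinv⟩, rfl⟩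
    exact ⟨Submodule.mem_map_of_mem hf, (Qmk_mem_QInv_glSet_iff (hspan hf)).2 hinv⟩

theorem kamekoKer_inf_QInv_glSet_eq_bot (hr : 3 ≤ r) (hs : s + 1 < 3)
    (hm : m + 1 = wordDegree r s) : kamekoKer m ⊓ QInv (2 * m + 4) glSet = ⊥ := by
  rw [kamekoKer_inf_QInv_glSet_eq_map hr hm, eq_bot_iff]
  rintro _ ⟨f, hf, rfl⟩
  exact (Qmk_eq_zero_iff (diracSpan_le_homog (by omega) hm hf.1)).2
    (mem_hits_of_invariantCoeff_eq_zero (by omega) hf (invariantCoeff_eq_zero (by omega) hs hf))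

theorem kamekoKer_inf_QInv_glSet_eq_span (hr : 3 ≤ r) (hs : 3 ≤ s + 1)
    (hm : m + 1 = wordDegree r s) :
    kamekoKer m ⊓ QInv (2 * m + 4) glSet = kk ∙ Qmk (2 * m + 4) (invariantWord r (s + 1)) := by
  rw [kamekoKer_inf_QInv_glSet_eq_map hr hm]
  have hmem : invariantWord r (s + 1) ∈ diracSpan r (s + 1) ⊓ glInvariants :=
    ⟨invariantWord_mem_diracSpan hs, invariantWord_mem_glInvariants hr hs⟩
  refine le_antisymm ?_ ((Submodule.span_singleton_le_iff_mem _ _).2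
    (Submodule.mem_map_of_mem hmem))
  rintro _ ⟨f, hf, rfl⟩
  have hdiff := sub_mem hf (Submodule.smul_mem _ (invariantCoeff r (s + 1) f) hmem)
  refine Submodule.mem_span_singleton.2 ⟨invariantCoeff r (s + 1) f, ?_⟩
  rw [eq_comm, ← sub_eq_zero, ← map_smul, ← map_sub,
    Qmk_eq_zero_iff (diracSpan_le_homog (by omega) hm hdiff.1)]
  refine mem_hits_of_invariantCoeff_eq_zero (by omega) hdiff ?_
  rw [map_sub, map_smul, invariantCoeff_invariantWord (by omega) hs, smul_eq_mul, mul_one, sub_self]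

lemma Qmk_invariantWord_ne_zero (hr : 1 ≤ r) (hs : 3 ≤ s + 1) (hm : m + 1 = wordDegree r s) :
    Qmk (2 * m + 4) (invariantWord r (s + 1)) ≠ 0 := by
  rw [Ne, Qmk_eq_zero_iff (diracSpan_le_homog hr hm (invariantWord_mem_diracSpan hs))]
  intro h
  have hzero : invariantCoeff r (s + 1) (invariantWord r (s + 1)) = 0 :=
    planeSpikeCoeff_of_mem_hits _ _ h
  rw [invariantCoeff_invariantWord hr hs] at hzero
  exact one_ne_zero hzero

lemma wordDegree_add_two (r s : ℕ) : wordDegree r s + 2 = 2 ^ s * (2 ^ (r + 2) + 1) := by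
  induction s with
  | zero =>
    have := Nat.one_le_two_pow (n := r + 2)
    rw [wordDegree]
    omega
  | succ s ih =>
    rw [wordDegree, pow_succ, mul_right_comm, ← ih]
    ring

end KamekoKernel

/-- For `s ≥ 1`, `t ≥ 5` and `n = 2(2^s-1) + 2^s(2^t-1) = 2^{s+t} + 2^s - 2 = 2m + 4`
(so the Kameko map is `Sq^0 : Q_n → Q_{(n-4)/2} = Q_{2^{s+t-1} + 2^{s-1} - 3}`), the subspace
of `GL_4(F_2)`-invariant elements of the kernel of the Kameko surjection is trivial if
`s ∈ {1,2}` and one-dimensional if `s ≥ 3`. -/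
theorem statement_6 (s t m : ℕ) (hs : 1 ≤ s) (ht : 5 ≤ t)
    (hm : 2 * m + 4 = 2 * (2 ^ s - 1) + 2 ^ s * (2 ^ t - 1)) :
    (s = 1 ∨ s = 2 → kamekoKer m ⊓ QInv (2 * m + 4) glSet = ⊥) ∧
    (3 ≤ s → Module.finrank kk ↥(kamekoKer m ⊓ QInv (2 * m + 4) glSet) = 1) := by
  obtain ⟨r, rfl⟩ : ∃ r, t = r + 2 := ⟨t - 2, by omega⟩
  obtain ⟨s, rfl⟩ : ∃ s', s = s' + 1 := ⟨s - 1, by omega⟩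
  have hr : 3 ≤ r := by omega
  have hdegree : m + 1 = wordDegree r s := by
    have h := wordDegree_add_two r s
    zify [Nat.one_le_two_pow] at h hm ⊢
    rw [pow_succ] at hm
    linarith
  refine ⟨fun h => kamekoKer_inf_QInv_glSet_eq_bot hr (by omega) hdegree, fun h => ?_⟩
  rw [kamekoKer_inf_QInv_glSet_eq_span hr h hdegree]
  exact finrank_span_singleton (Qmk_invariantWord_ne_zero (by omega) h hdegree)

end
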